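/- arXiv:0810.1227 — 5 statements merged into one kernel-verified Lean document; each statement's English description precedes it below -/
import Mathlib

section
/- Let m ≥ 0. In End_R(V^{⊗m}), the R-subalgebra generated by the operators ρ(e_i^{(l)}), ρ(f_i^{(l)}) (1 ≤ i ≤ n−1, l ≥ 1) together with all operators ρ(q^h) (h ∈ P∨) is equal to the R-subalgebra generated by the ρ(e_i^{(l)}), ρ(f_i^{(l)}) together with the operators ρ(K_i^{±1}) (1 ≤ i ≤ n−1) only. (That is, the image of the representation of the quantized enveloping algebra of gl_n on tensor space equals the image of the representation of its sl_n-subalgebra.) -/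
open scoped BigOperators

/-- The iterated tensor product of `m` copies of `V = R^n` and its dual `V*`
(which of the two is used in each tensor position is recorded separately by a
function `c : Fin m → Bool`, `true` meaning `V` and `false` meaning `V*`);
its basis is indexed by multi-indices. -/
abbrev Mx (R : Type*) [CommRing R] (n m : ℕ) := ((Fin m → Fin n) →₀ R)

/-- Kronecker delta with values in `ℤ`. -/
def deltaZ {n : ℕ} (a j : Fin n) : ℤ := if j = a then 1 else 0

/-- The action of `K_i^z e_i^{(k)}` on a single tensor factor (`b = true`: the
vector representation `V`; `b = false`: its dual `V*`, on which an element `x`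
acts by `φ ↦ φ ∘ S(x)`).  Here `a` plays the role of the index `i` and `b'`
of `i+1`.  The value at the basis vector with index `j` is returned as an
element of `Fin n →₀ R`. -/
noncomputable def singleE (R : Type*) [CommRing R] (q : Rˣ) (n : ℕ) (b : Bool)
    (a b' : Fin n) (z : ℤ) (k : ℕ) (j : Fin n) : Fin n →₀ R :=
  match b, k with
  | true, 0 => Finsupp.single j ((q ^ (z * (deltaZ a j - deltaZ b' j)) : Rˣ) : R)
  | true, 1 => if j = b' then Finsupp.single a ((q ^ z : Rˣ) : R) else 0
  | false, 0 => Finsupp.single j ((q ^ (z * (deltaZ b' j - deltaZ a j)) : Rˣ) : R)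
  | false, 1 => if j = a then Finsupp.single b' ((-(q ^ (z - 1)) : Rˣ) : R) else 0
  | _, _ + 2 => 0

/-- The action of `f_i^{(k)} K_i^z` on a single tensor factor; conventions as
in `singleE`. -/
noncomputable def singleF (R : Type*) [CommRing R] (q : Rˣ) (n : ℕ) (b : Bool)
    (a b' : Fin n) (z : ℤ) (k : ℕ) (j : Fin n) : Fin n →₀ R :=
  match b, k with
  | true, 0 => Finsupp.single j ((q ^ (z * (deltaZ a j - deltaZ b' j)) : Rˣ) : R)
  | true, 1 => if j = a then Finsupp.single b' ((q ^ z : Rˣ) : R) else 0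
  | false, 0 => Finsupp.single j ((q ^ (z * (deltaZ b' j - deltaZ a j)) : Rˣ) : R)
  | false, 1 => if j = b' then Finsupp.single a ((-(q ^ (z + 1)) : Rˣ) : R) else 0
  | _, _ + 2 => 0

/-- The operator `ρ(K_i^z e_i^{(k)})` on an `m`-fold tensor product of copies
of `V` and `V*` (described by `c`), obtained by iterating the comultiplication
`Δ(K_i^z e_i^{(k)}) = Σ_t q^{t(k−t)}·K_i^z e_i^{(k−t)} ⊗ K_i^{z+t−k} e_i^{(t)}`;
`a`, `b'` play the roles of `i`, `i+1`. -/
noncomputable def opE (R : Type*) [CommRing R] (q : Rˣ) (n : ℕ) (a b' : Fin n) :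
    (m : ℕ) → (c : Fin m → Bool) → ℤ → ℕ → (Mx R n m →ₗ[R] Mx R n m)
  | 0, _, _, k => if k = 0 then LinearMap.id else 0
  | (m + 1), c, z, k =>
    Finsupp.linearCombination R fun J : Fin (m + 1) → Fin n =>
      ∑ t ∈ Finset.range (k + 1),
        ((q ^ (t * (k - t)) : Rˣ) : R) •
          ((singleE R q n (c 0) a b' z (k - t) (J 0)).sum fun j' co =>
            co • Finsupp.mapDomain (Fin.cons j')
              (opE R q n a b' m (fun u => c u.succ) (z + (t : ℤ) - (k : ℤ)) t
                (Finsupp.single (Fin.tail J) 1)))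

/-- The operator `ρ(f_i^{(k)} K_i^z)`, obtained by iterating
`Δ(f_i^{(k)} K_i^z) = Σ_t q^{−t(k−t)}·f_i^{(k−t)} K_i^{z+t} ⊗ f_i^{(t)} K_i^z`. -/
noncomputable def opF (R : Type*) [CommRing R] (q : Rˣ) (n : ℕ) (a b' : Fin n) :
    (m : ℕ) → (c : Fin m → Bool) → ℤ → ℕ → (Mx R n m →ₗ[R] Mx R n m)
  | 0, _, _, k => if k = 0 then LinearMap.id else 0
  | (m + 1), c, z, k =>
    Finsupp.linearCombination R fun J : Fin (m + 1) → Fin n =>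
      ∑ t ∈ Finset.range (k + 1),
        ((q ^ (-(t * (k - t) : ℤ)) : Rˣ) : R) •
          ((singleF R q n (c 0) a b' (z + (t : ℤ)) (k - t) (J 0)).sum fun j' co =>
            co • Finsupp.mapDomain (Fin.cons j')
              (opF R q n a b' m (fun u => c u.succ) z t
                (Finsupp.single (Fin.tail J) 1)))

/-- The operator `ρ(q^h)` for `h = Σ h_i·(dual basis)` in the coweight lattice
`P∨` (identified with `Fin n → ℤ`): it acts diagonally, by `q^{ε_j(h)}` on a
`V`-factor with index `j` and by `q^{−ε_j(h)}` on a `V*`-factor. -/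
noncomputable def opH (R : Type*) [CommRing R] (q : Rˣ) (n : ℕ)
    (m : ℕ) (c : Fin m → Bool) (h : Fin n → ℤ) : Mx R n m →ₗ[R] Mx R n m :=
  Finsupp.linearCombination R fun J : Fin m → Fin n =>
    Finsupp.single J ((q ^ (∑ t, (if c t then (1 : ℤ) else -1) * h (J t)) : Rˣ) : R)

/-- The multi-index `j` with the entries in positions `p`, `p+1` swapped. -/
def swapIdx {n m : ℕ} (j : Fin m → Fin n) (p : ℕ) (hp : p + 1 < m) : Fin m → Fin n :=
  Function.update (Function.update j ⟨p, by omega⟩ (j ⟨p + 1, hp⟩)) ⟨p + 1, hp⟩ (j ⟨p, by omega⟩)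

/-- The Hecke operator `S` acting on two adjacent `V`-factors in tensor
positions `p`, `p+1` (0-based). -/
noncomputable def heckeOpX (R : Type*) [CommRing R] (q : Rˣ) (n m : ℕ)
    (p : ℕ) (hp : p + 1 < m) : Mx R n m →ₗ[R] Mx R n m :=
  Finsupp.linearCombination R fun j : Fin m → Fin n =>
    if j ⟨p, by omega⟩ = j ⟨p + 1, hp⟩ then
      ((q⁻¹ : Rˣ) : R) • Finsupp.single j 1
    else if j ⟨p, by omega⟩ < j ⟨p + 1, hp⟩ then
      Finsupp.single (swapIdx j p hp) 1
    else
      Finsupp.single (swapIdx j p hp) 1 + (((q⁻¹ : Rˣ) : R) - (q : R)) • Finsupp.single j 1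

/-- The Hecke operator `Ŝ` acting on two adjacent `V*`-factors in tensor
positions `p`, `p+1` (0-based). -/
noncomputable def heckeOpStar (R : Type*) [CommRing R] (q : Rˣ) (n m : ℕ)
    (p : ℕ) (hp : p + 1 < m) : Mx R n m →ₗ[R] Mx R n m :=
  Finsupp.linearCombination R fun j : Fin m → Fin n =>
    if j ⟨p, by omega⟩ = j ⟨p + 1, hp⟩ then
      ((q⁻¹ : Rˣ) : R) • Finsupp.single j 1
    else if j ⟨p + 1, hp⟩ < j ⟨p, by omega⟩ then
      Finsupp.single (swapIdx j p hp) 1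
    else
      Finsupp.single (swapIdx j p hp) 1 + (((q⁻¹ : Rˣ) : R) - (q : R)) • Finsupp.single j 1

/-- The contraction operator `E` of the walled Brauer algebra, acting on the
mixed tensor space `V^{⊗r} ⊗ (V*)^{⊗s}` at the tensor positions `r−1`, `r`
(0-based), i.e. at the last `V`-factor and the first `V*`-factor (it is `0`
by convention if `r = 0` or `s = 0`). -/
noncomputable def wallE (R : Type*) [CommRing R] (q : Rˣ) (n : ℕ) (r s : ℕ) :
    Mx R n (r + s) →ₗ[R] Mx R n (r + s) :=
  if h : 0 < r ∧ 0 < s then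
    Finsupp.linearCombination R fun j : Fin (r + s) → Fin n =>
      if j ⟨r - 1, by omega⟩ = j ⟨r, by omega⟩ then
        ((q ^ (2 * ((j ⟨r - 1, by omega⟩ : ℕ) : ℤ) + 2 - (n : ℤ) - 1) : Rˣ) : R) •
          ∑ u : Fin n,
            Finsupp.single
              (Function.update (Function.update j ⟨r - 1, by omega⟩ u) ⟨r, by omega⟩ u) 1
      else 0
  else 0

/-- The generating operators `E`, `S_t` (`1 ≤ t ≤ r−1`), `Ŝ_t` (`1 ≤ t ≤ s−1`)
of the action of the walled Brauer algebra `𝔅_{r,s}^n(q)` on the mixed tensor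
space. -/
def wallSet (R : Type*) [CommRing R] (q : Rˣ) (n : ℕ) (r s : ℕ) :
    Set (Module.End R (Mx R n (r + s))) :=
  {g | g = wallE R q n r s ∨
       (∃ (p : ℕ) (hp : p + 1 < r), g = heckeOpX R q n (r + s) p (by omega)) ∨
       (∃ (p : ℕ) (hp : p + 1 < s), g = heckeOpStar R q n (r + s) (r + p) (by omega))}

/-- The generators of the image of the quantized enveloping algebra `U`:
the operators `ρ(q^h)` (`h ∈ P∨`) together with the divided powers
`ρ(e_i^{(l)})`, `ρ(f_i^{(l)})` (`1 ≤ i ≤ n−1`, `l ≥ 1`). -/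
def qgGens (R : Type*) [CommRing R] (q : Rˣ) (n m : ℕ) (c : Fin m → Bool) :
    Set (Module.End R (Mx R n m)) :=
  {g | (∃ h : Fin n → ℤ, g = opH R q n m c h) ∨
       (∃ (i : Fin n) (hi : (i : ℕ) + 1 < n) (l : ℕ), 1 ≤ l ∧
          g = opE R q n i ⟨(i : ℕ) + 1, hi⟩ m c 0 l) ∨
       (∃ (i : Fin n) (hi : (i : ℕ) + 1 < n) (l : ℕ), 1 ≤ l ∧
          g = opF R q n i ⟨(i : ℕ) + 1, hi⟩ m c 0 l)}

/-- The generators of the image of the subalgebra `U'` (corresponding to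
`sl_n`): the operators `ρ(K_i^{±1})` (`1 ≤ i ≤ n−1`) together with the divided
powers `ρ(e_i^{(l)})`, `ρ(f_i^{(l)})` (`1 ≤ i ≤ n−1`, `l ≥ 1`). -/
def qgGensK (R : Type*) [CommRing R] (q : Rˣ) (n m : ℕ) (c : Fin m → Bool) :
    Set (Module.End R (Mx R n m)) :=
  {g | (∃ (i : Fin n) (hi : (i : ℕ) + 1 < n) (ε : ℤ), (ε = 1 ∨ ε = -1) ∧
          g = opH R q n m c (fun j => ε * (deltaZ i j - deltaZ ⟨(i : ℕ) + 1, hi⟩ j))) ∨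
       (∃ (i : Fin n) (hi : (i : ℕ) + 1 < n) (l : ℕ), 1 ≤ l ∧
          g = opE R q n i ⟨(i : ℕ) + 1, hi⟩ m c 0 l) ∨
       (∃ (i : Fin n) (hi : (i : ℕ) + 1 < n) (l : ℕ), 1 ≤ l ∧
          g = opF R q n i ⟨(i : ℕ) + 1, hi⟩ m c 0 l)}


section Aux
variable {R : Type*} [CommRing R] (q : Rˣ)

noncomputable def pz (z : ℤ) : R := ((q ^ z : Rˣ) : R)

theorem pz_mul (x y : ℤ) : pz q x * pz q y = pz q (x + y) := by
  simp [pz, zpow_add]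

theorem pz_zero : pz q 0 = 1 := by simp [pz]

noncomputable def bPos : ℕ → ℕ → R
  | _, 0 => 1
  | 0, _ + 1 => 0
  | N + 1, s + 1 => pz q (s + 1) * bPos N (s + 1) + pz q (s - N) * bPos N s

noncomputable def bNeg : ℕ → ℕ → R
  | _, 0 => 1
  | 0, _ + 1 => 0
  | N + 1, s + 1 => pz q (-(s + 1)) * (bNeg N (s + 1) - pz q (s + (N + 1)) * bNeg (N + 1) s)

noncomputable def bZ : ℤ → ℕ → R
  | Int.ofNat N, s => bPos q N s
  | Int.negSucc N, s => bNeg q (N + 1) s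

theorem bZ_nat (N : ℕ) (s : ℕ) : bZ q (N : ℤ) s = bPos q N s := rfl

theorem bZ_zero_right (N : ℤ) : bZ q N 0 = 1 := by
  cases N <;> simp [bZ, bPos, bNeg]

theorem bZ_zero_left (s : ℕ) : bZ q 0 (s + 1) = 0 := by
  change bPos q 0 (s + 1) = 0
  simp [bPos]

theorem bZ_pascal (N : ℤ) (s : ℕ) :
    bZ q (N + 1) (s + 1) = pz q (s + 1) * bZ q N (s + 1) + pz q (s - N) * bZ q N s := by
  rcases N with N | N
  · change bPos q (N + 1) (s + 1) = _
    simp [bPos, bZ]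
  · have h : bZ q (Int.negSucc N + 1) (s + 1) = bNeg q N (s + 1) := by
      rcases N with _ | N
      · change bPos q 0 (s + 1) = _
        simp [bPos, bNeg]
      · rfl
    rw [h]
    simp only [bZ]
    rw [bNeg, ← mul_assoc, pz_mul, show (s + 1 : ℤ) + -(s + 1) = 0 by ring, pz_zero,
      show (s : ℤ) - Int.negSucc N = s + (N + 1) by rw [Int.negSucc_eq]; ring]
    ring

theorem bPos_lt : ∀ (N s : ℕ), N < s → bPos q N s = 0
  | _, 0, h => by omega
  | 0, s + 1, _ => by simp [bPos]
  | N + 1, s + 1, h => by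
    rw [bPos, bPos_lt N (s + 1) (by omega), bPos_lt N s (by omega)]; simp

theorem bPos_self : ∀ (N : ℕ), bPos q N N = 1
  | 0 => by simp [bPos]
  | N + 1 => by
    rw [bPos, bPos_lt q N (N + 1) (by omega), bPos_self N]; simp [pz_zero]

variable (R) in
noncomputable def consL {n m : ℕ} (j : Fin n) : Mx R n m →ₗ[R] Mx R n (m + 1) :=
  Finsupp.lmapDomain R R (Fin.cons (α := fun _ => Fin n) j)

theorem consL_single {n m : ℕ} (j : Fin n) (J : Fin m → Fin n) (r : R) :
    consL R j (Finsupp.single J r) = Finsupp.single (Fin.cons j J : Fin (m + 1) → Fin n) r := by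
  simp [consL]

theorem opE_cons {n m : ℕ} (a b' j : Fin n) (z : ℤ) (k : ℕ) (x : Mx R n m) :
    opE R q n a b' (m + 1) (fun _ => true) z k (consL R j x) =
      ∑ t ∈ Finset.range (k + 1),
        pz q (t * (k - t)) •
          ((singleE R q n true a b' z (k - t) j).sum fun j' co =>
            co • consL R j' (opE R q n a b' m (fun _ => true) (z + t - k) t x)) := by
  induction x using Finsupp.induction_linear with
  | zero => simp
  | add x y hx hy =>
    rw [map_add, map_add, hx, hy, ← Finset.sum_add_distrib]
    refine Finset.sum_congr rfl fun t _ => ?_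
    rw [← smul_add, ← Finsupp.sum_add]
    simp
  | single J r =>
    rw [consL_single, opE, Finsupp.linearCombination_single, Finset.smul_sum]
    refine Finset.sum_congr rfl fun t ht => ?_
    rw [smul_comm]
    have : ((q ^ (t * (k - t)) : Rˣ) : R) = pz q (t * (k - t)) := by
      rw [pz, ← zpow_natCast]
      congr 2
      have : t ≤ k := by simp at ht; omega
      push_cast [this]; ring
    rw [this, Finsupp.smul_sum]
    congr 1
    simp only [Fin.cons_zero, Fin.tail_cons]
    refine Finsupp.sum_congr fun j' _ => ?_
    rw [smul_comm]
    congr 1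
    change r • consL R j' _ = _
    rw [← map_smul, ← map_smul, Finsupp.smul_single, smul_eq_mul, mul_one]

theorem opF_cons {n m : ℕ} (a b' j : Fin n) (z : ℤ) (k : ℕ) (x : Mx R n m) :
    opF R q n a b' (m + 1) (fun _ => true) z k (consL R j x) =
      ∑ t ∈ Finset.range (k + 1),
        pz q (-(t * (k - t))) •
          ((singleF R q n true a b' (z + t) (k - t) j).sum fun j' co =>
            co • consL R j' (opF R q n a b' m (fun _ => true) z t x)) := by
  induction x using Finsupp.induction_linear with
  | zero => simp
  | add x y hx hy =>
    rw [map_add, map_add, hx, hy, ← Finset.sum_add_distrib]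
    refine Finset.sum_congr rfl fun t _ => ?_
    rw [← smul_add, ← Finsupp.sum_add]
    simp
  | single J r =>
    rw [consL_single, opF, Finsupp.linearCombination_single, Finset.smul_sum]
    refine Finset.sum_congr rfl fun t ht => ?_
    rw [smul_comm]
    rw [Finsupp.smul_sum]
    congr 1
    simp only [Fin.cons_zero, Fin.tail_cons]
    refine Finsupp.sum_congr fun j' _ => ?_
    rw [smul_comm]
    congr 1
    change r • consL R j' _ = _
    rw [← map_smul, ← map_smul, Finsupp.smul_single, smul_eq_mul, mul_one]

variable {n : ℕ} (a b' : Fin n)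

noncomputable def EZ (m : ℕ) (z : ℤ) : ℤ → (Mx R n m →ₗ[R] Mx R n m)
  | Int.ofNat k => opE R q n a b' m (fun _ => true) z k
  | Int.negSucc _ => 0

noncomputable def FZ (m : ℕ) : ℤ → (Mx R n m →ₗ[R] Mx R n m)
  | Int.ofNat k => opF R q n a b' m (fun _ => true) 0 k
  | Int.negSucc _ => 0

theorem EZ_neg (m : ℕ) (z k : ℤ) (h : k < 0) : EZ q a b' m z k = 0 := by
  cases k with
  | ofNat k => simp at h; omega
  | negSucc k => rfl

theorem FZ_neg (m : ℕ) (k : ℤ) (h : k < 0) : FZ q a b' m k = 0 := by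
  cases k with
  | ofNat k => simp at h; omega
  | negSucc k => rfl

theorem opE_cons_zero {m : ℕ} (j : Fin n) (z : ℤ) (x : Mx R n m) :
    opE R q n a b' (m + 1) (fun _ => true) z 0 (consL R j x) =
      pz q (z * (deltaZ a j - deltaZ b' j)) •
        consL R j (opE R q n a b' m (fun _ => true) z 0 x) := by
  rw [opE_cons]
  simp [singleE, pz]

theorem opE_cons_succ {m : ℕ} (j : Fin n) (z : ℤ) (k : ℕ) (x : Mx R n m) :
    opE R q n a b' (m + 1) (fun _ => true) z (k + 1) (consL R j x) =
      pz q (z * (deltaZ a j - deltaZ b' j)) •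
        consL R j (opE R q n a b' m (fun _ => true) z (k + 1) x) +
      if j = b' then pz q (k + z) • consL R a (opE R q n a b' m (fun _ => true) (z - 1) k x)
        else 0 := by
  rw [opE_cons, Finset.sum_range_succ, Finset.sum_range_succ, Finset.sum_eq_zero, zero_add]
  · refine (add_comm _ _).trans ?_
    congr 1
    · simp [singleE, pz]
    · split_ifs with h
      · have : z + k - ((k + 1 : ℕ) : ℤ) = z - 1 := by push_cast; ring
        rw [this]
        simp only [Nat.add_sub_cancel_left, singleE, if_pos h]
        rw [Finsupp.sum_single_index (by simp), smul_smul]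
        change (_ * pz q z) • _ = _
        rw [pz_mul]
        congr 2
        push_cast; ring
      · simp [singleE, h]
  · intro t ht
    have ht : t < k := by simpa using ht
    obtain ⟨d, hd⟩ : ∃ d, k + 1 - t = d + 2 := ⟨k - 1 - t, by omega⟩
    rw [hd]
    simp [singleE]

theorem opF_cons_zero {m : ℕ} (j : Fin n) (x : Mx R n m) :
    opF R q n a b' (m + 1) (fun _ => true) 0 0 (consL R j x) =
        consL R j (opF R q n a b' m (fun _ => true) 0 0 x) := by
  rw [opF_cons]
  simp [singleF, pz]

theorem opF_cons_succ {m : ℕ} (j : Fin n) (k : ℕ) (x : Mx R n m) :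
    opF R q n a b' (m + 1) (fun _ => true) 0 (k + 1) (consL R j x) =
      pz q ((k + 1) * (deltaZ a j - deltaZ b' j)) •
        consL R j (opF R q n a b' m (fun _ => true) 0 (k + 1) x) +
      if j = a then consL R b' (opF R q n a b' m (fun _ => true) 0 k x)
        else 0 := by
  rw [opF_cons, Finset.sum_range_succ, Finset.sum_range_succ, Finset.sum_eq_zero, zero_add]
  · refine (add_comm _ _).trans ?_
    congr 1
    · simp [singleF, pz]
    · split_ifs with h
      · simp only [Nat.add_sub_cancel_left, singleF, if_pos h]
        rw [Finsupp.sum_single_index (by simp), smul_smul]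
        change (_ * pz q _) • _ = _
        rw [pz_mul]
        push_cast
        rw [show (-(k * (k + 1 - k)) + (0 + k) : ℤ) = 0 by ring, pz_zero, one_smul]
      · simp [singleF, h]
  · intro t ht
    have ht : t < k := by simpa using ht
    obtain ⟨d, hd⟩ : ∃ d, k + 1 - t = d + 2 := ⟨k - 1 - t, by omega⟩
    rw [hd]
    simp [singleF]

theorem EZ_cons {m : ℕ} (j : Fin n) (z k : ℤ) (x : Mx R n m) :
    EZ q a b' (m + 1) z k (consL R j x) =
      pz q (z * (deltaZ a j - deltaZ b' j)) • consL R j (EZ q a b' m z k x) +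
      if j = b' then pz q (k - 1 + z) • consL R a (EZ q a b' m (z - 1) (k - 1) x)
        else 0 := by
  rcases lt_trichotomy k 0 with h | h | h
  · rw [EZ_neg _ _ _ _ _ _ h, EZ_neg _ _ _ _ _ _ h, EZ_neg _ _ _ _ _ (k - 1) (by omega)]; simp
  · subst h
    rw [EZ_neg _ _ _ _ _ (0 - 1) (by omega)]
    simp only [ite_self, LinearMap.zero_apply, map_zero, smul_zero, add_zero]
    exact opE_cons_zero q a b' j z x
  · obtain ⟨k, rfl⟩ : ∃ l : ℕ, k = l + 1 := ⟨(k - 1).toNat, by omega⟩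
    rw [add_sub_cancel_right]
    exact opE_cons_succ q a b' j z k x

theorem FZ_cons {m : ℕ} (j : Fin n) (k : ℤ) (x : Mx R n m) :
    FZ q a b' (m + 1) k (consL R j x) =
      pz q (k * (deltaZ a j - deltaZ b' j)) • consL R j (FZ q a b' m k x) +
      if j = a then consL R b' (FZ q a b' m (k - 1) x) else 0 := by
  rcases lt_trichotomy k 0 with h | h | h
  · rw [FZ_neg _ _ _ _ _ h, FZ_neg _ _ _ _ _ h, FZ_neg _ _ _ _ (k - 1) (by omega)]; simp
  · subst h
    rw [FZ_neg _ _ _ _ (0 - 1) (by omega)]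
    simp only [ite_self, LinearMap.zero_apply, map_zero, smul_zero, add_zero, zero_mul, pz_zero, one_smul]
    exact opF_cons_zero q a b' j x
  · obtain ⟨k, rfl⟩ : ∃ l : ℕ, k = l + 1 := ⟨(k - 1).toNat, by omega⟩
    rw [add_sub_cancel_right]
    exact opF_cons_succ q a b' j k x

def wt {m : ℕ} (J : Fin m → Fin n) : ℤ := ∑ t, (deltaZ a (J t) - deltaZ b' (J t))

theorem wt_cons {m : ℕ} (j : Fin n) (J : Fin m → Fin n) :
    wt a b' (Fin.cons j J : Fin (m + 1) → Fin n) = deltaZ a j - deltaZ b' j + wt a b' J := by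
  simp only [wt, Fin.sum_univ_succ, Fin.cons_zero, Fin.cons_succ]

variable (R) in
noncomputable def wsp (m : ℕ) (w : ℤ) : Submodule R (Mx R n m) :=
  Finsupp.supported R R {J | wt a b' J = w}

theorem single_mem_wsp {m : ℕ} (J : Fin m → Fin n) (r : R) :
    Finsupp.single J r ∈ wsp R a b' m (wt a b' J) :=
  Finsupp.single_mem_supported R r rfl

theorem cons_mem_wsp {m : ℕ} (j : Fin n) {w w' : ℤ} (x : Mx R n m) (hx : x ∈ wsp R a b' m w)
    (h : w' = deltaZ a j - deltaZ b' j + w) : consL R j x ∈ wsp R a b' (m + 1) w' := by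
  subst h
  intro J hJ
  obtain ⟨J', hJ', rfl⟩ := Finset.mem_image.1 (Finsupp.mapDomain_support hJ)
  have : wt a b' J' = w := hx hJ'
  change wt a b' _ = _
  rw [wt_cons, this]

theorem tuple_ind {m : ℕ} {P : (Fin (m + 1) → Fin n) → Prop}
    (h : ∀ (j : Fin n) (J : Fin m → Fin n), P (Fin.cons j J)) (J) : P J := by
  rw [← Fin.cons_self_tail J]; exact h _ _

theorem lin_wsp {m : ℕ} {w : ℤ} {P : Mx R n m → Prop} (h0 : P 0)
    (hadd : ∀ x y, P x → P y → P (x + y)) (hs : ∀ (r : R) x, P x → P (r • x))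
    (h1 : ∀ J, wt a b' J = w → P (Finsupp.single J 1)) (x : Mx R n m)
    (hx : x ∈ wsp R a b' m w) : P x := by
  rw [wsp, Finsupp.supported_eq_span_single] at hx
  induction hx using Submodule.span_induction with
  | mem x h => obtain ⟨J, hJ, rfl⟩ := h; exact h1 J hJ
  | zero => exact h0
  | add x y _ _ h h' => exact hadd x y h h'
  | smul r x _ h => exact hs r x h

theorem EZ_zero_base (z k : ℤ) :
    EZ q a b' 0 z k = if k = 0 then LinearMap.id else 0 := by
  cases k with
  | ofNat k => simp [EZ, opE]
  | negSucc k => simp [EZ]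

theorem FZ_zero_base (k : ℤ) :
    FZ q a b' 0 k = if k = 0 then LinearMap.id else 0 := by
  cases k with
  | ofNat k => simp [FZ, opF]
  | negSucc k => simp [FZ]

theorem EZ_mem (hab : a ≠ b') (m : ℕ) : ∀ (z k w : ℤ) (x : Mx R n m), x ∈ wsp R a b' m w →
    EZ q a b' m z k x ∈ wsp R a b' m (w + 2 * k) := by
  induction m with
  | zero =>
    intro z k w x hx
    rw [EZ_zero_base]
    split_ifs with h
    · simpa [h] using hx
    · simp
  | succ m ih =>
    intro z k w x hx
    revert hx
    refine lin_wsp a b'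
      (P := fun x => EZ q a b' (m + 1) z k x ∈ wsp R a b' (m + 1) (w + 2 * k)) ?_ (fun x y hx hy => ?_) (fun r x hx => ?_) ?_ x
    · simp
    · rw [map_add]; exact add_mem hx hy
    · rw [map_smul]; exact Submodule.smul_mem _ _ hx
    · refine tuple_ind fun j J hJ => ?_
      rw [wt_cons] at hJ
      rw [← consL_single, EZ_cons]
      refine add_mem (Submodule.smul_mem _ _ (cons_mem_wsp a b' j _
        (ih _ _ _ _ (single_mem_wsp a b' J 1)) (by omega))) ?_
      split_ifs with h
      · refine Submodule.smul_mem _ _ (cons_mem_wsp a b' a _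
          (ih _ _ _ _ (single_mem_wsp a b' J 1)) ?_)
        subst h
        simp [deltaZ, hab, hab.symm] at hJ ⊢
        omega
      · simp

theorem FZ_mem (hab : a ≠ b') (m : ℕ) : ∀ (k w : ℤ) (x : Mx R n m), x ∈ wsp R a b' m w →
    FZ q a b' m k x ∈ wsp R a b' m (w - 2 * k) := by
  induction m with
  | zero =>
    intro k w x hx
    rw [FZ_zero_base]
    split_ifs with h
    · simpa [h] using hx
    · simp
  | succ m ih =>
    intro k w x hx
    revert hx
    refine lin_wsp a b'
      (P := fun x => FZ q a b' (m + 1) k x ∈ wsp R a b' (m + 1) (w - 2 * k)) ?_ (fun x y hx hy => ?_) (fun r x hx => ?_) ?_ x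
    · simp
    · rw [map_add]; exact add_mem hx hy
    · rw [map_smul]; exact Submodule.smul_mem _ _ hx
    · refine tuple_ind fun j J hJ => ?_
      rw [wt_cons] at hJ
      rw [← consL_single, FZ_cons]
      refine add_mem (Submodule.smul_mem _ _ (cons_mem_wsp a b' j _
        (ih _ _ _ (single_mem_wsp a b' J 1)) (by omega))) ?_
      split_ifs with h
      · refine (cons_mem_wsp a b' b' _
          (ih _ _ _ (single_mem_wsp a b' J 1)) ?_)
        subst h
        simp [deltaZ, hab, hab.symm] at hJ ⊢
        omega
      · simp

theorem EZ_shift (hab : a ≠ b') (m : ℕ) : ∀ (z k w : ℤ) (x : Mx R n m), x ∈ wsp R a b' m w →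
    EZ q a b' m z k x = pz q (z * (w + 2 * k)) • EZ q a b' m 0 k x := by
  induction m with
  | zero =>
    intro z k w x hx
    rw [EZ_zero_base, EZ_zero_base]
    split_ifs with h
    · revert hx
      refine lin_wsp a b'
        (P := fun x => LinearMap.id x = pz q (z * (w + 2 * k)) • LinearMap.id x) ?_ (fun x y hx hy => ?_) (fun r x hx => ?_) ?_ x
      · simp
      · rw [map_add, smul_add, ← hx, ← hy]
      · rw [map_smul, smul_comm, ← hx]
      · intro J hJ
        have : w = 0 := by rw [← hJ]; simp [wt]
        simp [h, this, pz_zero]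
    · simp
  | succ m ih =>
    intro z k w x hx
    revert hx
    refine lin_wsp a b'
      (P := fun x => EZ q a b' (m + 1) z k x = pz q (z * (w + 2 * k)) • EZ q a b' (m + 1) 0 k x) ?_ (fun x y hx hy => ?_) (fun r x hx => ?_) ?_ x
    · simp
    · rw [map_add, map_add, smul_add, hx, hy]
    · rw [map_smul, map_smul, smul_comm, hx]
    · refine tuple_ind fun j J hJ => ?_
      rw [wt_cons] at hJ
      have hm := single_mem_wsp a b' J (1 : R)
      rw [← consL_single, EZ_cons, EZ_cons, ih z k _ _ hm, ih (z - 1) _ _ _ hm,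
        ih (0 - 1) _ _ _ hm]
      simp only [map_smul, smul_add, smul_smul, pz_mul, smul_ite, smul_zero]
      congr 1
      · congr 2
        rw [← hJ]; ring
      · split_ifs with h
        · subst h
          simp [deltaZ, hab.symm] at hJ
          congr 2
          rw [← hJ]; ring
        · rfl

theorem sum_shift {M : Type*} [AddCommGroup M] [Module R M] (f : ℕ → R) (G : ℕ → M) (N : ℕ)
    (h : G (N + 1) = 0) :
    ∑ s ∈ Finset.range (N + 1), f s • G (s + 1) =
      ∑ s ∈ Finset.range N, f s • G (s + 1) := by
  rw [Finset.sum_range_succ, h]; simp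

/-- Pascal for sums -/
theorem pascal_sum {M : Type*} [AddCommGroup M] [Module R M] (G : ℕ → M) (N : ℕ) (L : ℤ)
    (h : G (N + 1) = 0) :
    ∑ s ∈ Finset.range (N + 1), bZ q (L + 1) s • G s =
      ∑ s ∈ Finset.range (N + 1), (pz q s * bZ q L s) • G s +
      ∑ s ∈ Finset.range (N + 1), (pz q (s - L) * bZ q L s) • G (s + 1) := by
  rw [sum_shift _ G N h, Finset.sum_range_succ', Finset.sum_range_succ' (n := N)]
  simp only [bZ_pascal, add_smul, Finset.sum_add_distrib, bZ_zero_right]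
  simp [pz_zero]
  abel

theorem comm_main (hab : a ≠ b') (m : ℕ) : ∀ (J : Fin m → Fin n) (k l : ℤ) (N : ℕ), k ≤ N →
    EZ q a b' m 0 k (FZ q a b' m l (Finsupp.single J (1 : R))) =
      ∑ s ∈ Finset.range (N + 1), bZ q (k - l + wt a b' J) s •
        FZ q a b' m (l - s) (EZ q a b' m 0 (k - s) (Finsupp.single J (1 : R))) := by
  induction m with
  | zero =>
    intro J k l N hN
    rw [Finset.sum_range_succ', Finset.sum_eq_zero]
    · simp [EZ_zero_base, FZ_zero_base, bZ_zero_right]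
      split_ifs <;> simp
    · intro s _
      simp only [EZ_zero_base, FZ_zero_base]
      by_cases h : k = l
      · simp [h, wt, bZ_zero_left]
      · split_ifs
        · omega
        all_goals simp
  | succ m ih =>
    refine tuple_ind fun j J k l N hN => ?_
    rw [← consL_single, wt_cons]
    have hm := single_mem_wsp a b' J (1 : R)
    set x := Finsupp.single J (1 : R) with hx
    set w := wt a b' J with hw
    have hsh : ∀ (k : ℤ), EZ q a b' m (0 - 1) k x = pz q (-(w + 2 * k)) • EZ q a b' m 0 k x := by
      intro k; rw [EZ_shift q a b' hab m _ k w x hm]; congr 2; ring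
    have hshF : ∀ (k l : ℤ), EZ q a b' m (0 - 1) k (FZ q a b' m l x) =
        pz q (-(w - 2 * l + 2 * k)) • EZ q a b' m 0 k (FZ q a b' m l x) := by
      intro k l
      rw [EZ_shift q a b' hab m _ k _ _ (FZ_mem q a b' hab m l w x hm)]; congr 2; ring
    have ih := ih J
    rw [← hx, ← hw] at ih
    by_cases hjb : j = b'
    · subst hjb
      have d1 : deltaZ a j = 0 := by simp [deltaZ, hab.symm]
      have d2 : deltaZ j j = 1 := by simp [deltaZ]
      have d3 : deltaZ a a = 1 := by simp [deltaZ]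
      have d4 : deltaZ j a = 0 := by simp [deltaZ, hab]
      simp only [EZ_cons, FZ_cons, map_add, map_smul, if_pos, if_neg hab, if_neg hab.symm, d1, d2,
        d3, d4, add_zero, hsh, hshF]
      set G : ℕ → Mx R n m := fun s => FZ q a j m (l - s) (EZ q a j m 0 (k - s) x) with hG
      have hGN : G (N + 1) = 0 := by
        simp only [hG]; rw [EZ_neg _ _ _ _ _ (k - _) (by push_cast; omega)]; simp
      have hG1 : ∀ s : ℕ, FZ q a j m (l - s - 1) (EZ q a j m 0 (k - s - 1) x) = G (s + 1) := by
        intro s; simp only [hG]; push_cast; simp only [sub_sub]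
      have e0 : ∀ s : ℕ, FZ q a j m (l - s) (EZ q a j m 0 (k - s) x) = G s := fun _ => rfl
      obtain ⟨L, hL⟩ : ∃ L, L = k - l + (0 - 1 + w) := ⟨_, rfl⟩
      rw [ih k l N hN, ih (k - 1) l N (by omega), ← hL, show k - l + w = L + 1 by omega,
        show k - 1 - l + w = L by omega]
      simp only [hG1, e0]
      rw [pascal_sum q G N L hGN]
      have e2 : ∀ s : ℕ, k - 1 - (s : ℤ) = k - s - 1 := fun s => by ring
      simp only [map_add, map_sum, map_smul, smul_add, Finset.smul_sum, smul_smul,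
        Finset.sum_add_distrib, e2]
      refine (add_assoc _ _ _).trans ?_
      congr 1
      · refine Finset.sum_congr rfl fun s _ => ?_
        congr 1
        simp only [mul_comm (bZ q _ _), ← mul_assoc, pz_mul]
        congr 2; ring
      refine (add_comm _ _).trans ?_
      congr 1
      all_goals
        refine Finset.sum_congr rfl fun s _ => ?_
        congr 1
        simp only [mul_comm (bZ q _ _), ← mul_assoc, pz_mul]
        congr 2; rw [← sub_eq_zero]; try simp only [hL]
        ring
    · by_cases hja : j = a
      · subst hja
        have d1 : deltaZ b' j = 0 := by simp [deltaZ, hab]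
        have d2 : deltaZ j j = 1 := by simp [deltaZ]
        have d3 : deltaZ b' b' = 1 := by simp [deltaZ]
        have d4 : deltaZ j b' = 0 := by simp [deltaZ, hab.symm]
        simp only [EZ_cons, FZ_cons, map_add, map_smul, if_pos, if_neg hab, d1, d2,
          d3, d4, add_zero, hsh, hshF]
        set G : ℕ → Mx R n m := fun s => FZ q j b' m (l - s) (EZ q j b' m 0 (k - s) x) with hG
        have hGN : G (N + 1) = 0 := by
          simp only [hG]; rw [EZ_neg _ _ _ _ _ (k - _) (by push_cast; omega)]; simp
        have hG1 : ∀ s : ℕ, FZ q j b' m (l - 1 - s) (EZ q j b' m 0 (k - 1 - s) x) = G (s + 1) := by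
          intro s; simp only [hG]; push_cast; simp only [sub_sub, add_comm]
        have e0 : ∀ s : ℕ, FZ q j b' m (l - s) (EZ q j b' m 0 (k - s) x) = G s := fun _ => rfl
        obtain ⟨L, hL⟩ : ∃ L, L = k - l + w := ⟨_, rfl⟩
        rw [ih k l N hN, ih (k - 1) (l - 1) N (by omega), ih k (l - 1) N hN, ← hL,
          show k - (l - 1) + w = L + 1 by omega,
          show k - 1 - (l - 1) + w = L by omega, show k - l + (1 - 0 + w) = L + 1 by omega]
        simp only [hG1, e0]
        have hp := pascal_sum q (fun s => pz q (l - s) • consL R j (G s)) N L (by simp [hGN])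
        have e2 : ∀ s : ℕ, l - 1 - (s : ℤ) = l - s - 1 := fun s => by ring
        simp only [zero_mul, pz_zero, one_smul, smul_add, sub_zero, mul_one,
          Finset.sum_add_distrib]
        rw [hp]
        simp only [map_sum, map_smul, smul_add, Finset.smul_sum, smul_smul, e2]
        refine Eq.trans ?_ (add_assoc _ _ _).symm
        congr 1
        · refine Finset.sum_congr rfl fun s _ => ?_
          congr 1
          simp only [mul_comm (bZ q _ _), ← mul_assoc, mul_right_comm _ (bZ q _ _), pz_mul]
          congr 2; ring
        refine (add_comm _ _).trans ?_
        congr 1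
        refine Finset.sum_congr rfl fun s _ => ?_
        congr 1
        simp only [mul_comm (bZ q _ _), ← mul_assoc, mul_right_comm _ (bZ q _ _), pz_mul]
        congr 2; rw [← sub_eq_zero]; push_cast; simp only [hL]; ring
      · have d1 : deltaZ b' j = 0 := by simp [deltaZ, hjb]
        have d2 : deltaZ a j = 0 := by simp [deltaZ, hja]
        simp only [EZ_cons, FZ_cons, map_add, map_smul, if_neg hja, if_neg hjb, d1, d2, add_zero]
        simp only [sub_zero, mul_zero, pz_zero, one_smul, zero_add]
        rw [ih k l N hN]
        simp

variable (R n) in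
noncomputable def diagA (m : ℕ) : ((Fin m → Fin n) → R) →ₐ[R] Module.End R (Mx R n m) :=
  AlgHom.ofLinearMap
    { toFun := fun g => Finsupp.linearCombination R fun J => Finsupp.single J (g J)
      map_add' := fun g g' => by
        refine Finsupp.lhom_ext' fun J => LinearMap.ext_ring ?_
        simp
      map_smul' := fun r g => by
        refine Finsupp.lhom_ext' fun J => LinearMap.ext_ring ?_
        simp [-Finsupp.single_mul] }
    (by
        refine Finsupp.lhom_ext' fun J => LinearMap.ext_ring ?_
        simp)
    (fun g g' => by
        refine Finsupp.lhom_ext' fun J => LinearMap.ext_ring ?_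
        simp [-Finsupp.single_mul, mul_comm])

theorem diagA_single {m : ℕ} (g : (Fin m → Fin n) → R) (J : Fin m → Fin n) :
    diagA R n m g (Finsupp.single J 1) = g J • Finsupp.single J 1 := by
  simp [diagA]

theorem opH_eq (m : ℕ) (h : Fin n → ℤ) :
    opH R q n m (fun _ => true) h = diagA R n m (fun J => pz q (∑ t, h (J t))) := by
  ext J : 1
  simp [opH, diagA, pz]

theorem EZ_id (m : ℕ) : EZ q a b' m 0 0 = LinearMap.id := by
  induction m with
  | zero => simp [EZ_zero_base]
  | succ m ih =>
    ext J : 2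
    revert J
    refine tuple_ind fun j J => ?_
    simp only [LinearMap.comp_apply, Finsupp.lsingle_apply]
    rw [← consL_single, EZ_cons, ih, EZ_neg _ _ _ _ _ (0 - 1) (by omega)]
    simp [pz_zero]

theorem FZ_id (m : ℕ) : FZ q a b' m 0 = LinearMap.id := by
  induction m with
  | zero => simp [FZ_zero_base]
  | succ m ih =>
    ext J : 2
    revert J
    refine tuple_ind fun j J => ?_
    simp only [LinearMap.comp_apply, Finsupp.lsingle_apply]
    rw [← consL_single, FZ_cons, ih, FZ_neg _ _ _ _ (0 - 1) (by omega)]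
    simp [pz_zero]

theorem comm_op (hab : a ≠ b') (m : ℕ) (s : ℕ) :
    (EZ q a b' m 0 s * FZ q a b' m s : Module.End R (Mx R n m)) =
      ∑ u ∈ Finset.range s, FZ q a b' m ((s - u : ℕ) : ℤ) * EZ q a b' m 0 ((s - u : ℕ) : ℤ) *
        diagA R n m (fun J => bZ q (wt a b' J) u)
      + diagA R n m (fun J => bZ q (wt a b' J) s) := by
  refine Finsupp.lhom_ext' fun J => LinearMap.ext_ring ?_
  simp only [LinearMap.comp_apply, Finsupp.lsingle_apply, Module.End.mul_apply,
    LinearMap.add_apply, LinearMap.sum_apply, diagA_single, map_smul]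
  rw [comm_main q a b' hab m J s s s le_rfl, Finset.sum_range_succ]
  simp only [sub_self, zero_add, EZ_id, FZ_id, LinearMap.id_apply]
  congr 1
  refine Finset.sum_congr rfl fun u hu => ?_
  rw [Nat.cast_sub (by simp at hu; omega)]

section Sub
variable {m : ℕ} (A : Subalgebra R (Module.End R (Mx R n m)))

theorem mem_of_add {X Y Z : Module.End R (Mx R n m)} (h : Z = X + Y) (hZ : Z ∈ A) (hX : X ∈ A) :
    Y ∈ A := by
  have : Y = Z + (-1 : R) • X := by
    refine LinearMap.ext fun v => ?_
    rw [h]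
    simp only [LinearMap.add_apply, LinearMap.smul_apply, neg_smul, one_smul]
    abel
  rw [this]
  exact add_mem hZ (A.smul_mem hX _)

theorem bZ_mem0 (hab : a ≠ b') (hE : ∀ l : ℕ, EZ q a b' m 0 l ∈ A)
    (hF : ∀ l : ℕ, FZ q a b' m l ∈ A) (s : ℕ) :
    diagA R n m (fun J => bZ q (wt a b' J) s) ∈ A := by
  induction s using Nat.strong_induction_on with
  | _ s ih =>
    have h := comm_op q a b' hab m s
    refine mem_of_add A h (mul_mem (hE s) (hF s)) (sum_mem fun u hu => ?_)
    exact mul_mem (mul_mem (hF _) (hE _)) (ih u (by simpa using hu))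

theorem bZ_mem (hab : a ≠ b') (hE : ∀ l : ℕ, EZ q a b' m 0 l ∈ A)
    (hF : ∀ l : ℕ, FZ q a b' m l ∈ A)
    (hK : diagA R n m (fun J => pz q (- wt a b' J)) ∈ A) (c s : ℕ) :
    diagA R n m (fun J => bZ q (wt a b' J + c) s) ∈ A := by
  induction c generalizing s with
  | zero => simpa using bZ_mem0 q a b' A hab hE hF s
  | succ c ih =>
    rcases s with _ | s
    · simp only [bZ_zero_right]
      exact (map_one (diagA R n m)).symm ▸ one_mem A
    · have : (fun J : Fin m → Fin n => bZ q (wt a b' J + (c + 1 : ℕ)) (s + 1)) =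
        pz q (s + 1) • (fun J => bZ q (wt a b' J + c) (s + 1)) +
        pz q (s - c) • ((fun J => pz q (- wt a b' J)) * (fun J => bZ q (wt a b' J + c) s)) := by
        funext J
        simp only [Pi.add_apply, Pi.smul_apply, Pi.mul_apply, smul_eq_mul]
        rw [← mul_assoc, pz_mul]
        push_cast
        rw [← add_assoc, bZ_pascal]
        congr 3; ring
      rw [this, map_add, map_smul, map_smul, map_mul]
      exact add_mem (A.smul_mem (ih _) _) (A.smul_mem (mul_mem hK (ih _)) _)

theorem wt_abs (J : Fin m → Fin n) : 0 ≤ wt a b' J + m ∧ wt a b' J + m ≤ (2 * m : ℕ) := by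
  have h1 : ∑ t : Fin m, (-1 : ℤ) ≤ wt a b' J :=
    Finset.sum_le_sum fun t _ => by unfold deltaZ; split_ifs <;> omega
  have h2 : wt a b' J ≤ ∑ t : Fin m, (1 : ℤ) :=
    Finset.sum_le_sum fun t _ => by unfold deltaZ; split_ifs <;> omega
  simp at h1 h2
  constructor
  · omega
  · push_cast; omega

theorem delta_mem (hab : a ≠ b') (hE : ∀ l : ℕ, EZ q a b' m 0 l ∈ A)
    (hF : ∀ l : ℕ, FZ q a b' m l ∈ A)
    (hK : diagA R n m (fun J => pz q (- wt a b' J)) ∈ A) (d : ℕ) :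
    ∀ s : ℕ, s + d = 2 * m →
    diagA R n m (fun J => if wt a b' J + m = s then 1 else 0) ∈ A := by
  induction d using Nat.strong_induction_on with
  | _ d ih =>
    intro s hs
    have : (fun J : Fin m → Fin n => if wt a b' J + m = s then (1 : R) else 0) =
        (fun J => bZ q (wt a b' J + m) s) - ∑ e ∈ Finset.range d,
          bPos q (2 * m - e) s • fun J => if wt a b' J + m = (2 * m - e : ℕ) then (1 : R) else 0 := by
      funext J
      simp only [Pi.sub_apply, Finset.sum_apply, Pi.smul_apply, smul_eq_mul]
      obtain ⟨h0, h1⟩ := wt_abs a b' J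
      obtain ⟨x, hx⟩ := Int.eq_ofNat_of_zero_le h0
      rw [hx] at h1 ⊢
      rw [bZ_nat]
      simp only [Nat.cast_inj, Nat.cast_le] at h1 ⊢
      rcases lt_trichotomy x s with h | h | h
      · rw [if_neg (by omega), bPos_lt _ _ _ h, Finset.sum_eq_zero, sub_zero]
        intro e he
        rw [if_neg, mul_zero]
        simp at he; omega
      · subst h
        rw [if_pos rfl, bPos_self, Finset.sum_eq_zero, sub_zero]
        intro e he
        rw [if_neg, mul_zero]
        simp at he; omega
      · rw [if_neg (by omega), Finset.sum_eq_single (2 * m - x)]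
        · rw [if_pos (by omega), show 2 * m - (2 * m - x) = x by omega]; simp
        · intro e he hne
          rw [if_neg, mul_zero]
          simp at he; omega
        · intro he
          simp at he; omega
    have h2 := congrArg (diagA R n m) (eq_sub_iff_add_eq'.1 this).symm
    rw [map_add, map_sum] at h2
    refine mem_of_add A h2 (bZ_mem q a b' A hab hE hF hK m s) (sum_mem fun e he => ?_)
    rw [map_smul]
    have he : e < d := by simpa using he
    exact A.smul_mem (ih e he _ (by omega)) _

theorem delta_mem' (hab : a ≠ b') (hE : ∀ l : ℕ, EZ q a b' m 0 l ∈ A)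
    (hF : ∀ l : ℕ, FZ q a b' m l ∈ A)
    (hK : diagA R n m (fun J => pz q (- wt a b' J)) ∈ A) (J₀ : Fin m → Fin n) :
    diagA R n m (fun J => if wt a b' J = wt a b' J₀ then 1 else 0) ∈ A := by
  obtain ⟨h0, h1⟩ := wt_abs a b' J₀
  obtain ⟨x, hx⟩ := Int.eq_ofNat_of_zero_le h0
  rw [hx, Nat.cast_le] at h1
  have := delta_mem q a b' A hab hE hF hK (2 * m - x) x (by omega)
  rw [← hx] at this
  simpa using this

end Sub

/-- counts -/
def cnt {m : ℕ} (J : Fin m → Fin n) (j : Fin n) : ℤ := ∑ t, deltaZ j (J t)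

theorem sum_cnt {m : ℕ} (J : Fin m → Fin n) : ∑ j, cnt J j = m := by
  simp only [cnt]
  rw [Finset.sum_comm]
  simp [deltaZ]

theorem sum_h {m : ℕ} (J : Fin m → Fin n) (h : Fin n → ℤ) :
    ∑ t, h (J t) = ∑ j, cnt J j * h j := by
  simp only [cnt, Finset.sum_mul]
  rw [Finset.sum_comm]
  simp [deltaZ]

def wtv {m : ℕ} (J : Fin m → Fin n) : Fin n → ℤ := fun i =>
  if hi : (i : ℕ) + 1 < n then wt i ⟨(i : ℕ) + 1, hi⟩ J else 0

theorem cnt_eq {m : ℕ} (J J' : Fin m → Fin n) (h : wtv J = wtv J') : cnt J = cnt J' := by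
  rcases Nat.eq_zero_or_pos n with rfl | hn
  · funext j; exact j.elim0
  have key : ∀ (k : ℕ) (hk : k < n), cnt J ⟨k, hk⟩ - cnt J' ⟨k, hk⟩ =
      cnt J ⟨0, hn⟩ - cnt J' ⟨0, hn⟩ := by
    intro k
    induction k with
    | zero => intro _; rfl
    | succ k ih =>
      intro hk
      have h1 := congrFun h ⟨k, by omega⟩
      simp only [wtv, dif_pos hk, wt, Finset.sum_sub_distrib] at h1
      have h2 := ih (by omega)
      simp only [cnt] at h2 ⊢
      omega
  have hs : ∑ j, (cnt J j - cnt J' j) = 0 := by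
    rw [Finset.sum_sub_distrib, sum_cnt, sum_cnt, sub_self]
  rw [Finset.sum_congr rfl (fun j _ => key j.1 j.2)] at hs
  rw [Finset.sum_const, Finset.card_univ, Fintype.card_fin, smul_eq_zero] at hs
  funext j
  have := key j.1 j.2
  simp only [Fin.eta] at this
  rcases hs with hs | hs <;> omega

theorem opH_mem {m : ℕ} (A : Subalgebra R (Module.End R (Mx R n m)))
    (hE : ∀ (i : Fin n) (hi : (i : ℕ) + 1 < n) (l : ℕ), EZ q i ⟨(i : ℕ) + 1, hi⟩ m 0 l ∈ A)
    (hF : ∀ (i : Fin n) (hi : (i : ℕ) + 1 < n) (l : ℕ), FZ q i ⟨(i : ℕ) + 1, hi⟩ m l ∈ A)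
    (hK : ∀ (i : Fin n) (hi : (i : ℕ) + 1 < n),
      diagA R n m (fun J => pz q (- wt i ⟨(i : ℕ) + 1, hi⟩ J)) ∈ A)
    (h : Fin n → ℤ) : opH R q n m (fun _ => true) h ∈ A := by
  classical
  rw [opH_eq]
  have hd : ∀ J₀ : Fin m → Fin n, diagA R n m (fun J => if wtv J = wtv J₀ then 1 else 0) ∈ A := by
    intro J₀
    have : (fun J : Fin m → Fin n => if wtv J = wtv J₀ then (1 : R) else 0) =
        ∏ i : Fin n, fun J => if wtv J i = wtv J₀ i then (1 : R) else 0 := by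
      funext J
      rw [Finset.prod_apply, Finset.prod_ite_zero]
      simp [funext_iff]
    rw [this]
    change _ ∈ A.comap (diagA R n m)
    refine prod_mem fun i _ => ?_
    change diagA R n m _ ∈ A
    by_cases hi : (i : ℕ) + 1 < n
    · simp only [wtv, dif_pos hi]
      refine delta_mem' q _ _ A ?_ (hE i hi) (hF i hi) (hK i hi) J₀
      intro h; have := congrArg Fin.val h; simp at this
    · simp only [wtv, dif_neg hi, if_true]
      exact (map_one (diagA R n m)).symm ▸ one_mem A
  have hsum : (fun J : Fin m → Fin n => pz q (∑ t, h (J t))) =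
      ∑ v ∈ Finset.univ.image (wtv : (Fin m → Fin n) → Fin n → ℤ),
        fun J => if wtv J = v then pz q (∑ t, h (J t)) else 0 := by
    funext J
    simp
  rw [hsum, map_sum]
  refine sum_mem fun v hv => ?_
  obtain ⟨J₀, -, rfl⟩ := Finset.mem_image.1 hv
  have : (fun J : Fin m → Fin n => if wtv J = wtv J₀ then pz q (∑ t, h (J t)) else 0) =
      pz q (∑ t, h (J₀ t)) • fun J => if wtv J = wtv J₀ then (1 : R) else 0 := by
    funext J
    simp only [Pi.smul_apply, smul_eq_mul, mul_ite, mul_one, mul_zero]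
    split_ifs with hw
    · rw [sum_h, sum_h, cnt_eq J J₀ hw]
    · rfl
  rw [this, map_smul]
  exact A.smul_mem (hd J₀) _

end Aux

/-- on ordinary tensor space `V^{⊗m}`, the `R`-subalgebra of
`End_R(V^{⊗m})` generated by the operators `ρ(e_i^{(l)})`, `ρ(f_i^{(l)})`
together with all `ρ(q^h)` (`h ∈ P∨`) coincides with the `R`-subalgebra
generated by the `ρ(e_i^{(l)})`, `ρ(f_i^{(l)})` together with the
`ρ(K_i^{±1})` only. -/
theorem stmt2 (R : Type*) [CommRing R] (q : Rˣ) (n m : ℕ) :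
    Algebra.adjoin R (qgGens R q n m (fun _ => true)) =
      Algebra.adjoin R (qgGensK R q n m (fun _ => true)) := by
  apply le_antisymm
  · refine Algebra.adjoin_le ?_
    rintro g (⟨h, rfl⟩ | hg | hg)
    · refine opH_mem q _ ?_ ?_ ?_ h
      · intro i hi l
        rcases l with _ | l
        · rw [Nat.cast_zero, EZ_id]; exact one_mem _
        · exact Algebra.subset_adjoin (Or.inr (Or.inl ⟨i, hi, l + 1, by omega, rfl⟩))
      · intro i hi l
        rcases l with _ | l
        · rw [Nat.cast_zero, FZ_id]; exact one_mem _
        · exact Algebra.subset_adjoin (Or.inr (Or.inr ⟨i, hi, l + 1, by omega, rfl⟩))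
      · intro i hi
        refine Algebra.subset_adjoin (Or.inl ⟨i, hi, -1, Or.inr rfl, ?_⟩)
        rw [opH_eq]
        congr 1
        funext J
        rw [← Finset.mul_sum, neg_one_mul]
        rfl
    · exact Algebra.subset_adjoin (Or.inr (Or.inl hg))
    · exact Algebra.subset_adjoin (Or.inr (Or.inr hg))
  · refine Algebra.adjoin_le ?_
    rintro g (⟨i, hi, ε, -, rfl⟩ | hg | hg)
    · exact Algebra.subset_adjoin (Or.inl ⟨_, rfl⟩)
    · exact Algebra.subset_adjoin (Or.inr (Or.inl hg))
    · exact Algebra.subset_adjoin (Or.inr (Or.inr hg))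
end

section
/- The R-linear map κ : V* → V^{⊗(n−1)} defined by κ(v*_i) = (−q)^i · Σ_{w ∈ S_{n−1}} (−q)^{ℓ(w)} v_{(1,2,…,î,…,n)·w}, where (1,2,…,î,…,n) is the multi-index listing {1,…,n}∖{i} in increasing order, w acts on multi-indices by place permutation, and ℓ is Coxeter length, is injective and commutes with the actions of K_i^{±1}, e_i^{(l)} and f_i^{(l)} for all 1 ≤ i ≤ n−1 and l ≥ 1 (acting on V* via the antipode and on V^{⊗(n−1)} via iterated comultiplication). -/
open scoped BigOperators

/-- Number of inversions of a permutation of `Fin k` (its Coxeter length). -/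
def invCount {k : ℕ} (w : Equiv.Perm (Fin k)) : ℕ :=
  ((Finset.univ : Finset (Fin k × Fin k)).filter
    (fun p => p.1 < p.2 ∧ w p.2 < w p.1)).card

/-- The increasing enumeration of `{1,…,n} \ {i}` (0-based). -/
def omitIdx {n : ℕ} (i : Fin n) (t : Fin (n - 1)) : Fin n :=
  if (t : ℕ) < (i : ℕ) then ⟨t, by have := t.2; omega⟩ else ⟨(t : ℕ) + 1, by have := t.2; omega⟩

/-- The map `κ : V* → V^{⊗(n−1)}`,
`v*_i ↦ (−q)^i·Σ_{w ∈ S_{n−1}} (−q)^{ℓ(w)} v_{(1,…,î,…,n)·w}` (here `V*` is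
the `1`-fold tensor product with a single `V*`-factor). -/
noncomputable def kappaMap (R : Type*) [CommRing R] (q : Rˣ) (n : ℕ) :
    Mx R n 1 →ₗ[R] Mx R n (n - 1) :=
  Finsupp.linearCombination R fun J : Fin 1 → Fin n =>
    (((-q) ^ ((J 0 : ℕ) + 1) : Rˣ) : R) •
      ∑ w : Equiv.Perm (Fin (n - 1)),
        (((-q) ^ invCount w : Rˣ) : R) • Finsupp.single (fun t => omitIdx (J 0) (w t)) 1


section helpers
variable {R : Type*} [CommRing R] (q : Rˣ) {n : ℕ}

theorem opE_zero_step (a b : Fin n) (m : ℕ) (z : ℤ) (J : Fin (m+1) → Fin n) :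
    opE R q n a b (m+1) (fun _ => true) z 0 (Finsupp.single J 1) =
      ((q ^ (z * (deltaZ a (J 0) - deltaZ b (J 0))) : Rˣ) : R) • Finsupp.mapDomain (Fin.cons (J 0))
        (opE R q n a b m (fun _ => true) z 0 (Finsupp.single (Fin.tail J) 1)) := by
  rw [opE, Finsupp.linearCombination_single, one_smul]
  simp [singleE, Finsupp.sum_single_index]

theorem opE_succ_step (a b : Fin n) (m : ℕ) (z : ℤ) (k : ℕ) (J : Fin (m+1) → Fin n) :
    opE R q n a b (m+1) (fun _ => true) z (k+1) (Finsupp.single J 1) =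
      ((q ^ (z * (deltaZ a (J 0) - deltaZ b (J 0))) : Rˣ) : R) • Finsupp.mapDomain (Fin.cons (J 0))
        (opE R q n a b m (fun _ => true) z (k+1) (Finsupp.single (Fin.tail J) 1)) +
      if J 0 = b then ((q ^ k * q ^ z : Rˣ) : R) • Finsupp.mapDomain (Fin.cons a)
        (opE R q n a b m (fun _ => true) (z-1) k (Finsupp.single (Fin.tail J) 1)) else 0 := by
  rw [opE, Finsupp.linearCombination_single, one_smul, Finset.sum_range_succ,
    Finset.sum_range_succ, Finset.sum_eq_zero, zero_add]
  · refine (add_comm _ _).trans ?_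
    congr 1
    · simp [singleE, Finsupp.sum_single_index]
    · have h1 : k + 1 - k = 1 := by omega
      have h2 : z + (k : ℤ) - ((k + 1 : ℕ) : ℤ) = z - 1 := by push_cast; ring
      rw [h1, h2]
      split_ifs with h
      · simp [singleE, Finsupp.sum_single_index, h, smul_smul]
      · simp [singleE, h]
  · intro t ht
    obtain ⟨s, hs⟩ : ∃ s, k + 1 - t = s + 2 := ⟨k - 1 - t, by have := Finset.mem_range.1 ht; omega⟩
    rw [hs]
    simp [singleE]

theorem opF_zero_step (a b : Fin n) (m : ℕ) (z : ℤ) (J : Fin (m+1) → Fin n) :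
    opF R q n a b (m+1) (fun _ => true) z 0 (Finsupp.single J 1) =
      ((q ^ (z * (deltaZ a (J 0) - deltaZ b (J 0))) : Rˣ) : R) • Finsupp.mapDomain (Fin.cons (J 0))
        (opF R q n a b m (fun _ => true) z 0 (Finsupp.single (Fin.tail J) 1)) := by
  rw [opF, Finsupp.linearCombination_single, one_smul]
  simp [singleF, Finsupp.sum_single_index]

theorem opF_succ_step (a b : Fin n) (m : ℕ) (z : ℤ) (k : ℕ) (J : Fin (m+1) → Fin n) :
    opF R q n a b (m+1) (fun _ => true) z (k+1) (Finsupp.single J 1) =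
      ((q ^ ((z + (k + 1)) * (deltaZ a (J 0) - deltaZ b (J 0))) : Rˣ) : R) •
        Finsupp.mapDomain (Fin.cons (J 0))
        (opF R q n a b m (fun _ => true) z (k+1) (Finsupp.single (Fin.tail J) 1)) +
      if J 0 = a then ((q ^ z : Rˣ) : R) • Finsupp.mapDomain (Fin.cons b)
        (opF R q n a b m (fun _ => true) z k (Finsupp.single (Fin.tail J) 1)) else 0 := by
  rw [opF, Finsupp.linearCombination_single, one_smul, Finset.sum_range_succ,
    Finset.sum_range_succ, Finset.sum_eq_zero, zero_add]
  · refine (add_comm _ _).trans ?_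
    congr 1
    · simp [singleF, Finsupp.sum_single_index]
    · have h1 : k + 1 - k = 1 := by omega
      have h2 : (k : ℤ) * (((k + 1 : ℕ) : ℤ) - k) = k := by push_cast; ring
      rw [h1, h2]
      split_ifs with h
      · simp only [singleF, h, if_true]
        rw [Finsupp.sum_single_index (by simp), smul_smul, ← Units.val_mul, ← zpow_add]
        congr 3
        simp
      · simp [singleF, h]
  · intro t ht
    obtain ⟨s, hs⟩ : ∃ s, k + 1 - t = s + 2 := ⟨k - 1 - t, by have := Finset.mem_range.1 ht; omega⟩
    rw [hs]
    simp [singleF]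

theorem opE_K (a b : Fin n) (m : ℕ) (z : ℤ) (J : Fin m → Fin n) :
    opE R q n a b m (fun _ => true) z 0 (Finsupp.single J 1) =
      ((q ^ (z * ∑ t, (deltaZ a (J t) - deltaZ b (J t))) : Rˣ) : R) • Finsupp.single J 1 := by
  induction m with
  | zero => simp [opE]
  | succ m ih =>
    rw [opE_zero_step, ih, Fin.sum_univ_succ, mul_add, zpow_add, Finsupp.mapDomain_smul,
      Finsupp.mapDomain_single, smul_smul, Fin.cons_self_tail, Units.val_mul]
    rfl

theorem opF_K (a b : Fin n) (m : ℕ) (J : Fin m → Fin n) :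
    opF R q n a b m (fun _ => true) 0 0 (Finsupp.single J 1) = Finsupp.single J 1 := by
  induction m with
  | zero => simp [opF]
  | succ m ih =>
    rw [opF_zero_step, ih, Finsupp.mapDomain_single, Fin.cons_self_tail]
    simp

theorem opE_none (a b : Fin n) (m : ℕ) (z : ℤ) (k : ℕ) (J : Fin m → Fin n) (h : ∀ t, J t ≠ b) :
    opE R q n a b m (fun _ => true) z (k+1) (Finsupp.single J 1) = 0 := by
  induction m with
  | zero => simp [opE]
  | succ m ih =>
    rw [opE_succ_step, ih (Fin.tail J) (fun t => h t.succ)]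
    simp [h 0]

theorem opF_none (a b : Fin n) (m : ℕ) (z : ℤ) (k : ℕ) (J : Fin m → Fin n) (h : ∀ t, J t ≠ a) :
    opF R q n a b m (fun _ => true) z (k+1) (Finsupp.single J 1) = 0 := by
  induction m with
  | zero => simp [opF]
  | succ m ih =>
    rw [opF_succ_step, ih (Fin.tail J) (fun t => h t.succ)]
    simp [h 0]

theorem opE_two (a b : Fin n) (m : ℕ) (z : ℤ) (k : ℕ) (J : Fin m → Fin n) (hJ : Function.Injective J) :
    opE R q n a b m (fun _ => true) z (k+2) (Finsupp.single J 1) = 0 := by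
  induction m with
  | zero => simp [opE]
  | succ m ih =>
    rw [opE_succ_step, ih (Fin.tail J) (fun x y h => Fin.succ_injective _ (hJ h))]
    split_ifs with h
    · rw [opE_none]
      · simp
      · intro t ht
        exact absurd (hJ (h.trans ht.symm)) (Fin.succ_ne_zero t).symm
    · simp

theorem opF_two (a b : Fin n) (m : ℕ) (z : ℤ) (k : ℕ) (J : Fin m → Fin n) (hJ : Function.Injective J) :
    opF R q n a b m (fun _ => true) z (k+2) (Finsupp.single J 1) = 0 := by
  induction m with
  | zero => simp [opF]
  | succ m ih =>
    rw [opF_succ_step, ih (Fin.tail J) (fun x y h => Fin.succ_injective _ (hJ h))]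
    split_ifs with h
    · rw [opF_none]
      · simp
      · intro t ht
        exact absurd (hJ (h.trans ht.symm)) (Fin.succ_ne_zero t).symm
    · simp

theorem opE_one (a b : Fin n) (m : ℕ) (J : Fin m → Fin n) (hJ : Function.Injective J)
    (p : Fin m) (hp : J p = b) :
    opE R q n a b m (fun _ => true) 0 1 (Finsupp.single J 1) =
      ((q ^ (-∑ t, if p < t then (deltaZ a (J t) - deltaZ b (J t)) else 0) : Rˣ) : R) •
        Finsupp.single (Function.update J p a) 1 := by
  induction m with
  | zero => exact p.elim0
  | succ m ih =>
    rw [opE_succ_step, Fin.sum_univ_succ]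
    induction p using Fin.cases with
    | zero =>
      rw [opE_none, opE_K, if_pos hp]
      · rw [Finsupp.mapDomain_smul, Finsupp.mapDomain_single]
        have : Fin.cons a (Fin.tail J) = Function.update J 0 a := by
          rw [← Fin.update_cons_zero (J 0) (Fin.tail J) a, Fin.cons_self_tail]
        rw [this]
        simp [Fin.tail]
      · intro t ht
        exact absurd (hJ (hp.trans ht.symm)) (Fin.succ_ne_zero t).symm
    | succ p =>
      have h0 : J 0 ≠ b := fun h => absurd (hJ (h.trans hp.symm)) (Fin.succ_ne_zero p).symm
      rw [ih (Fin.tail J) (fun x y h => Fin.succ_injective _ (hJ h)) p hp, if_neg h0,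
        Finsupp.mapDomain_smul, Finsupp.mapDomain_single]
      have : Fin.cons (J 0) (Function.update (Fin.tail J) p a) = Function.update J p.succ a := by
        rw [Fin.cons_update, Fin.cons_self_tail]
      rw [this]
      simp [Fin.tail]

theorem opF_one (a b : Fin n) (m : ℕ) (J : Fin m → Fin n) (hJ : Function.Injective J)
    (p : Fin m) (hp : J p = a) :
    opF R q n a b m (fun _ => true) 0 1 (Finsupp.single J 1) =
      ((q ^ (∑ t, if t < p then (deltaZ a (J t) - deltaZ b (J t)) else 0) : Rˣ) : R) •
        Finsupp.single (Function.update J p b) 1 := by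
  induction m with
  | zero => exact p.elim0
  | succ m ih =>
    rw [opF_succ_step, Fin.sum_univ_succ]
    induction p using Fin.cases with
    | zero =>
      rw [opF_none, opF_K, if_pos hp]
      · rw [Finsupp.mapDomain_single]
        have : Fin.cons b (Fin.tail J) = Function.update J 0 b := by
          rw [← Fin.update_cons_zero (J 0) (Fin.tail J) b, Fin.cons_self_tail]
        rw [this]
        simp
      · intro t ht
        exact absurd (hJ (hp.trans ht.symm)) (Fin.succ_ne_zero t).symm
    | succ p =>
      have h0 : J 0 ≠ a := fun h => absurd (hJ (h.trans hp.symm)) (Fin.succ_ne_zero p).symm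
      rw [ih (Fin.tail J) (fun x y h => Fin.succ_injective _ (hJ h)) p hp, if_neg h0,
        Finsupp.mapDomain_smul, Finsupp.mapDomain_single]
      have : Fin.cons (J 0) (Function.update (Fin.tail J) p b) = Function.update J p.succ b := by
        rw [Fin.cons_update, Fin.cons_self_tail]
      rw [this, smul_smul, ← Units.val_mul, ← zpow_add]
      simp [Fin.tail]

theorem opE_dual_one (a b : Fin n) (J : Fin 1 → Fin n) :
    opE R q n a b 1 (fun _ => false) 0 1 (Finsupp.single J 1) =
      if J 0 = a then (-((q⁻¹ : Rˣ) : R)) • Finsupp.single (fun _ => b) 1 else 0 := by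
  rw [opE, Finsupp.linearCombination_single, one_smul, Finset.sum_range_succ,
    Finset.sum_range_succ]
  split_ifs with h
  · simp [singleE, opE, h, -Finsupp.single_neg]
    have : (Fin.cons b (Fin.tail J) : Fin 1 → Fin n) = fun _ => b := by
      funext t; fin_cases t; rfl
    simp [this]
  · simp [singleE, opE, h]

theorem opE_dual_two (a b : Fin n) (k : ℕ) (J : Fin 1 → Fin n) :
    opE R q n a b 1 (fun _ => false) 0 (k+2) (Finsupp.single J 1) = 0 := by
  rw [opE, Finsupp.linearCombination_single, one_smul]
  refine Finset.sum_eq_zero fun t _ => ?_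
  cases t with
  | zero => simp [singleE]
  | succ t => simp [opE]

theorem opF_dual_one (a b : Fin n) (J : Fin 1 → Fin n) :
    opF R q n a b 1 (fun _ => false) 0 1 (Finsupp.single J 1) =
      if J 0 = b then (-(q : R)) • Finsupp.single (fun _ => a) 1 else 0 := by
  rw [opF, Finsupp.linearCombination_single, one_smul, Finset.sum_range_succ,
    Finset.sum_range_succ]
  split_ifs with h
  · simp [singleF, opF, h, -Finsupp.single_neg]
    have : (Fin.cons a (Fin.tail J) : Fin 1 → Fin n) = fun _ => a := by
      funext t; fin_cases t; rfl
    simp [this]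
  · simp [singleF, opF, h]

theorem opF_dual_two (a b : Fin n) (k : ℕ) (J : Fin 1 → Fin n) :
    opF R q n a b 1 (fun _ => false) 0 (k+2) (Finsupp.single J 1) = 0 := by
  rw [opF, Finsupp.linearCombination_single, one_smul]
  refine Finset.sum_eq_zero fun t _ => ?_
  cases t with
  | zero => simp [singleF]
  | succ t => simp [opF]

theorem omitIdx_val (i : Fin n) (t : Fin (n-1)) :
    (omitIdx i t : ℕ) = if (t : ℕ) < i then (t : ℕ) else t + 1 := by
  unfold omitIdx; split_ifs <;> rfl

theorem omitIdx_ne (i : Fin n) (t : Fin (n-1)) : omitIdx i t ≠ i := by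
  intro h
  have := congrArg Fin.val h
  rw [omitIdx_val] at this
  split_ifs at this <;> omega

theorem omitIdx_inj (i : Fin n) : Function.Injective (omitIdx i) := by
  intro s t h
  have := congrArg Fin.val h
  rw [omitIdx_val, omitIdx_val] at this
  apply Fin.ext
  split_ifs at this <;> omega

theorem omitIdx_surj (i j : Fin n) (h : j ≠ i) : ∃ t, omitIdx i t = j := by
  have h' : (j : ℕ) ≠ i := fun e => h (Fin.ext e)
  have := i.2
  have := j.2
  by_cases hl : (j : ℕ) < i
  · refine ⟨⟨j, by omega⟩, Fin.ext ?_⟩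
    rw [omitIdx_val]; simp [hl]
  · refine ⟨⟨j - 1, by omega⟩, Fin.ext ?_⟩
    rw [omitIdx_val]; simp only; split_ifs <;> omega

theorem sum_omit (i : Fin n) (w : Equiv.Perm (Fin (n-1))) (h : Fin n → ℤ) :
    ∑ t, h (omitIdx i (w t)) = ∑ j, h j - h i := by
  rw [Equiv.sum_comp w (fun t => h (omitIdx i t)), eq_sub_iff_add_eq,
    ← Finset.sum_erase_add _ _ (Finset.mem_univ i)]
  congr 1
  have : Finset.univ.erase i = Finset.univ.image (omitIdx i) := by
    ext j
    simp only [Finset.mem_erase, Finset.mem_univ, and_true, Finset.mem_image, true_and]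
    exact ⟨omitIdx_surj i j, fun ⟨t, ht⟩ => ht ▸ omitIdx_ne i t⟩
  rw [this, Finset.sum_image (fun x _ y _ h => omitIdx_inj i h)]

theorem kappa_single (J : Fin 1 → Fin n) :
    kappaMap R q n (Finsupp.single J 1) = (((-q) ^ ((J 0 : ℕ) + 1) : Rˣ) : R) •
      ∑ w : Equiv.Perm (Fin (n - 1)),
        (((-q) ^ invCount w : Rˣ) : R) • Finsupp.single (fun t => omitIdx (J 0) (w t)) 1 := by
  rw [kappaMap, Finsupp.linearCombination_single, one_smul]

theorem invCount_swap {k : ℕ} (α β : Fin k) (hαβ : (β : ℕ) = α + 1) (w : Equiv.Perm (Fin k))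
    (h : w⁻¹ α < w⁻¹ β) : invCount (Equiv.swap α β * w) = invCount w + 1 := by
  unfold invCount
  have hw : ∀ u, w (w⁻¹ u) = u := fun u => by simp
  rw [← Finset.card_insert_of_notMem (a := (w⁻¹ α, w⁻¹ β))]
  · congr 1
    ext ⟨x, y⟩
    obtain ⟨u, rfl⟩ : ∃ u, x = w⁻¹ u := ⟨w x, by simp⟩
    obtain ⟨v, rfl⟩ : ∃ u, y = w⁻¹ u := ⟨w y, by simp⟩
    simp only [Finset.mem_filter, Finset.mem_univ, true_and, Finset.mem_insert, Prod.mk.injEq,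
      EmbeddingLike.apply_eq_iff_eq, Equiv.Perm.mul_apply, hw]
    by_cases h1 : u = α <;> by_cases h2 : u = β <;> by_cases h3 : v = α <;> by_cases h4 : v = β <;>
      simp only [Equiv.swap_apply_def, h1, h2, h3, h4, if_true, if_false] <;>
      grind
  · simp only [Finset.mem_filter, Finset.mem_univ, true_and, not_and, hw]
    intro _ h'
    have := Fin.lt_def.1 h'
    omega

theorem pair_sum_zero {M : Type*} [AddCommGroup M] [Module R M] (q : Rˣ) {k : ℕ} (α β : Fin k)
    (hαβ : (β : ℕ) = α + 1) (F : Equiv.Perm (Fin k) → M)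
    (hF : ∀ w : Equiv.Perm (Fin k), w⁻¹ α < w⁻¹ β →
      F w = (q : R) • F (Equiv.swap α β * w)) :
    ∑ w : Equiv.Perm (Fin k), (((-q) ^ invCount w : Rˣ) : R) • F w = 0 := by
  have hne : α ≠ β := fun h => by rw [h] at hαβ; omega
  have key : ∀ w : Equiv.Perm (Fin k), w⁻¹ α < w⁻¹ β →
      (((-q) ^ invCount w : Rˣ) : R) • F w +
      (((-q) ^ invCount (Equiv.swap α β * w) : Rˣ) : R) • F (Equiv.swap α β * w) = 0 := by
    intro w hw
    rw [invCount_swap α β hαβ w hw, hF w hw, smul_smul, ← add_smul, pow_succ]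
    simp
  refine Finset.sum_involution (fun w _ => Equiv.swap α β * w) ?_ ?_ ?_ ?_
  · intro w _
    rcases lt_trichotomy (w⁻¹ α) (w⁻¹ β) with h | h | h
    · exact key w h
    · exact absurd (w⁻¹.injective h) hne
    · have := key (Equiv.swap α β * w) (by simpa using h)
      rw [Equiv.swap_mul_self_mul] at this
      rw [add_comm]; exact this
  · intro w _ _ h
    have : Equiv.swap α β = 1 := by simpa using h
    exact hne (Equiv.swap_eq_one_iff.1 this)
  · intro w _; exact Finset.mem_univ _
  · intro w _; exact Equiv.swap_mul_self_mul _ _ _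

theorem sum_delta {m : ℕ} (J : Fin m → Fin n) (hJ : Function.Injective J) (P : Fin m → Prop)
    [DecidablePred P] (p : Fin m) (b : Fin n) (hp : J p = b) :
    (∑ t, if P t then deltaZ b (J t) else 0) = if P p then 1 else 0 := by
  rw [Finset.sum_eq_single p]
  · simp [deltaZ, hp]
  · intro t _ ht
    have : J t ≠ b := fun h => ht (hJ (h.trans hp.symm))
    simp [deltaZ, this]
  · simp

theorem sum_delta_none {m : ℕ} (J : Fin m → Fin n) (P : Fin m → Prop)
    [DecidablePred P] (b : Fin n) (hp : ∀ t, J t ≠ b) :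
    (∑ t, if P t then deltaZ b (J t) else 0) = 0 :=
  Finset.sum_eq_zero fun t _ => by simp [deltaZ, hp t]

theorem sum_delta_sub {m : ℕ} (J : Fin m → Fin n) (P : Fin m → Prop)
    [DecidablePred P] (a b : Fin n) :
    (∑ t, if P t then (deltaZ a (J t) - deltaZ b (J t)) else 0) =
    (∑ t, if P t then deltaZ a (J t) else 0) - ∑ t, if P t then deltaZ b (J t) else 0 := by
  rw [← Finset.sum_sub_distrib]
  exact Finset.sum_congr rfl fun t _ => by split_ifs <;> simp

theorem omit_w_inj (j : Fin n) (w : Equiv.Perm (Fin (n-1))) :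
    Function.Injective (fun t => omitIdx j (w t)) := (omitIdx_inj j).comp w.injective

/-- the antisymmetrised vector -/
noncomputable def kvec (j : Fin n) : Mx R n (n-1) :=
  ∑ w : Equiv.Perm (Fin (n - 1)),
        (((-q) ^ invCount w : Rˣ) : R) • Finsupp.single (fun t => omitIdx j (w t)) 1

/-- Values of the omitted sequences for adjacent omitted indices. -/
theorem omit_adj (a b : Fin n) (hab : (b : ℕ) = a + 1) (β : Fin (n-1)) (hβ : omitIdx a β = b) :
    omitIdx b β = a ∧ ∀ t, t ≠ β → omitIdx b t = omitIdx a t := by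
  have h := congrArg Fin.val hβ
  rw [omitIdx_val] at h
  constructor
  · apply Fin.ext
    rw [omitIdx_val]
    split_ifs at h ⊢ <;> omega
  · intro t ht
    have : (t : ℕ) ≠ β := fun e => ht (Fin.ext e)
    apply Fin.ext
    rw [omitIdx_val, omitIdx_val]
    split_ifs at h ⊢ <;> omega

theorem omit_pair (a b j : Fin n) (hab : (b : ℕ) = a + 1) (α β : Fin (n-1))
    (hα : omitIdx j α = a) (hβ : omitIdx j β = b) : (β : ℕ) = α + 1 := by
  have h := congrArg Fin.val hα
  have h' := congrArg Fin.val hβ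
  have ha : (a : ℕ) ≠ j := fun e => omitIdx_ne j α (hα.trans (Fin.ext e))
  have hb : (b : ℕ) ≠ j := fun e => omitIdx_ne j β (hβ.trans (Fin.ext e))
  rw [omitIdx_val] at h h'
  split_ifs at h h' <;> omega

theorem kE_a (a b : Fin n) (hab : (b : ℕ) = a + 1) :
    opE R q n a b (n-1) (fun _ => true) 0 1 (kvec q a) = kvec q b := by
  obtain ⟨β, hβ⟩ := omitIdx_surj a b (fun h => by rw [h] at hab; omega)
  obtain ⟨h1, h2⟩ := omit_adj a b hab β hβ
  rw [kvec, map_sum, kvec]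
  refine Finset.sum_congr rfl fun w _ => ?_
  rw [map_smul, opE_one q a b (n-1) _ (omit_w_inj a w) (w⁻¹ β) (by simp [hβ]), sum_delta_sub,
    sum_delta_none _ _ a (fun t => omitIdx_ne _ _),
    sum_delta _ (omit_w_inj a w) _ (w⁻¹ β) b (by simp [hβ])]
  have : Function.update (fun t => omitIdx a (w t)) (w⁻¹ β) a = fun t => omitIdx b (w t) := by
    funext t
    by_cases ht : t = w⁻¹ β
    · subst ht; simp [h1]
    · rw [Function.update_of_ne ht, h2]
      intro h; apply ht; rw [← h]; simp
  rw [this]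
  simp

theorem kF_b (a b : Fin n) (hab : (b : ℕ) = a + 1) :
    opF R q n a b (n-1) (fun _ => true) 0 1 (kvec q b) = kvec q a := by
  obtain ⟨β, hβ⟩ := omitIdx_surj a b (fun h => by rw [h] at hab; omega)
  obtain ⟨h1, h2⟩ := omit_adj a b hab β hβ
  rw [kvec, map_sum, kvec]
  refine Finset.sum_congr rfl fun w _ => ?_
  rw [map_smul, opF_one q a b (n-1) _ (omit_w_inj b w) (w⁻¹ β) (by simp [h1]), sum_delta_sub,
    sum_delta_none _ _ b (fun t => omitIdx_ne _ _),
    sum_delta _ (omit_w_inj b w) _ (w⁻¹ β) a (by simp [h1])]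
  have : Function.update (fun t => omitIdx b (w t)) (w⁻¹ β) b = fun t => omitIdx a (w t) := by
    funext t
    by_cases ht : t = w⁻¹ β
    · subst ht; simp [hβ]
    · rw [Function.update_of_ne ht, h2]
      intro h; apply ht; rw [← h]; simp
  rw [this]
  simp

theorem kE_b (a b : Fin n) (l : ℕ) :
    opE R q n a b (n-1) (fun _ => true) 0 (l+1) (kvec q b) = 0 := by
  rw [kvec, map_sum]
  refine Finset.sum_eq_zero fun w _ => ?_
  rw [map_smul, opE_none q a b (n-1) 0 l _ (fun t => omitIdx_ne b _), smul_zero]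

theorem kF_a (a b : Fin n) (l : ℕ) :
    opF R q n a b (n-1) (fun _ => true) 0 (l+1) (kvec q a) = 0 := by
  rw [kvec, map_sum]
  refine Finset.sum_eq_zero fun w _ => ?_
  rw [map_smul, opF_none q a b (n-1) 0 l _ (fun t => omitIdx_ne a _), smul_zero]

theorem kE_two (a b j : Fin n) (l : ℕ) :
    opE R q n a b (n-1) (fun _ => true) 0 (l+2) (kvec q j) = 0 := by
  rw [kvec, map_sum]
  refine Finset.sum_eq_zero fun w _ => ?_
  rw [map_smul, opE_two q a b (n-1) 0 l _ (omit_w_inj j w), smul_zero]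

theorem kF_two (a b j : Fin n) (l : ℕ) :
    opF R q n a b (n-1) (fun _ => true) 0 (l+2) (kvec q j) = 0 := by
  rw [kvec, map_sum]
  refine Finset.sum_eq_zero fun w _ => ?_
  rw [map_smul, opF_two q a b (n-1) 0 l _ (omit_w_inj j w), smul_zero]

theorem update_swap (j c : Fin n) (α β : Fin (n-1)) (w : Equiv.Perm (Fin (n-1)))
    (hα : omitIdx j α = c) :
    Function.update (fun t => omitIdx j (w t)) (w⁻¹ β) c =
    Function.update (fun t => omitIdx j ((Equiv.swap α β * w) t))
      ((Equiv.swap α β * w)⁻¹ β) c := by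
  have hw : ∀ u, w (w⁻¹ u) = u := fun u => by simp
  funext t
  obtain ⟨u, rfl⟩ : ∃ u, t = w⁻¹ u := ⟨w t, by simp⟩
  have e : (Equiv.swap α β * w)⁻¹ β = w⁻¹ α := by simp
  rw [e]
  by_cases h1 : u = β
  · subst h1
    by_cases h2 : u = α
    · subst h2; simp
    · rw [Function.update_self, Function.update_of_ne (fun h => h2 (w⁻¹.injective h))]
      simp [hα]
  · rw [Function.update_of_ne (fun h => h1 (w⁻¹.injective h)), hw]
    by_cases h2 : u = α
    · subst h2; simp [hα]
    · rw [Function.update_of_ne (fun h => h2 (w⁻¹.injective h)), Equiv.Perm.mul_apply, hw,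
        Equiv.swap_apply_of_ne_of_ne h2 h1]

theorem kE_ne (a b j : Fin n) (hab : (b : ℕ) = a + 1) (ha : a ≠ j) (hb : b ≠ j) :
    opE R q n a b (n-1) (fun _ => true) 0 1 (kvec q j) = 0 := by
  obtain ⟨α, hα⟩ := omitIdx_surj j a ha
  obtain ⟨β, hβ⟩ := omitIdx_surj j b hb
  have hαβ := omit_pair a b j hab α β hα hβ
  rw [kvec, map_sum]
  simp only [map_smul]
  refine pair_sum_zero q α β hαβ _ ?_
  have key : ∀ w : Equiv.Perm (Fin (n-1)),
      opE R q n a b (n-1) (fun _ => true) 0 1 (Finsupp.single (fun t => omitIdx j (w t)) 1) =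
      ((q ^ (-(if w⁻¹ β < w⁻¹ α then 1 else 0 : ℤ)) : Rˣ) : R) •
        Finsupp.single (Function.update (fun t => omitIdx j (w t)) (w⁻¹ β) a) 1 := by
    intro w
    rw [opE_one q a b (n-1) _ (omit_w_inj j w) (w⁻¹ β) (by simp [hβ]), sum_delta_sub,
      sum_delta _ (omit_w_inj j w) _ (w⁻¹ α) a (by simp [hα]),
      sum_delta _ (omit_w_inj j w) _ (w⁻¹ β) b (by simp [hβ]), if_neg (lt_irrefl _), sub_zero]
  intro w hw
  rw [key, key, ← update_swap j a α β w hα, smul_smul, if_neg hw.not_gt,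
    if_pos (by simpa using hw)]
  simp

theorem kF_ne (a b j : Fin n) (hab : (b : ℕ) = a + 1) (ha : a ≠ j) (hb : b ≠ j) :
    opF R q n a b (n-1) (fun _ => true) 0 1 (kvec q j) = 0 := by
  obtain ⟨α, hα⟩ := omitIdx_surj j a ha
  obtain ⟨β, hβ⟩ := omitIdx_surj j b hb
  have hαβ := omit_pair a b j hab α β hα hβ
  rw [kvec, map_sum]
  simp only [map_smul]
  refine pair_sum_zero q α β hαβ _ ?_
  have key : ∀ w : Equiv.Perm (Fin (n-1)),
      opF R q n a b (n-1) (fun _ => true) 0 1 (Finsupp.single (fun t => omitIdx j (w t)) 1) =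
      ((q ^ (-(if w⁻¹ β < w⁻¹ α then 1 else 0 : ℤ)) : Rˣ) : R) •
        Finsupp.single (Function.update (fun t => omitIdx j (w t)) (w⁻¹ α) b) 1 := by
    intro w
    rw [opF_one q a b (n-1) _ (omit_w_inj j w) (w⁻¹ α) (by simp [hα]), sum_delta_sub,
      sum_delta _ (omit_w_inj j w) _ (w⁻¹ α) a (by simp [hα]),
      sum_delta _ (omit_w_inj j w) _ (w⁻¹ β) b (by simp [hβ]), if_neg (lt_irrefl _), zero_sub]
  intro w hw
  have hs := update_swap j b β α w hβ
  rw [Equiv.swap_comm] at hs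
  rw [key, key, ← hs, smul_smul, if_neg hw.not_gt,
    if_pos (by simpa using hw)]
  simp

theorem kappa_single' (J : Fin 1 → Fin n) :
    kappaMap R q n (Finsupp.single J 1) = (((-q) ^ ((J 0 : ℕ) + 1) : Rˣ) : R) • kvec q (J 0) :=
  kappa_single q J

theorem kvec_eval (i j : Fin n) :
    (kvec q j : Mx R n (n-1)) (omitIdx i) = if j = i then 1 else 0 := by
  rw [kvec, Finsupp.finset_sum_apply]
  split_ifs with h
  · subst h
    rw [Finset.sum_eq_single 1]
    · have : invCount (1 : Equiv.Perm (Fin (n-1))) = 0 := by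
        unfold invCount
        rw [Finset.card_eq_zero, Finset.filter_eq_empty_iff]
        rintro ⟨x, y⟩ _ ⟨h1, h2⟩
        exact absurd h1 (not_lt_of_gt h2)
      rw [this]
      simp
    · intro w _ hw
      rw [Finsupp.smul_apply, Finsupp.single_eq_of_ne, smul_zero]
      intro h
      apply hw
      ext t
      have := omitIdx_inj j (congrFun h t)
      simp [← this]
    · simp
  · refine Finset.sum_eq_zero fun w _ => ?_
    rw [Finsupp.smul_apply, Finsupp.single_eq_of_ne, smul_zero]
    intro h'
    obtain ⟨t, ht⟩ := omitIdx_surj i j h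
    have := congrFun h' t
    exact omitIdx_ne j (w t) (this.symm.trans ht)

theorem kappa_inj : Function.Injective (kappaMap R q n) := by
  rw [injective_iff_map_eq_zero]
  intro x hx
  ext J
  have key : Finsupp.lapply (R := R) (omitIdx (J 0)) ∘ₗ kappaMap R q n =
      (((-q) ^ ((J 0 : ℕ) + 1) : Rˣ) : R) • Finsupp.lapply (R := R) J := by
    refine Finsupp.lhom_ext' fun J' => LinearMap.ext_ring ?_
    simp only [LinearMap.comp_apply, Finsupp.lsingle_apply, LinearMap.smul_apply,
      Finsupp.lapply_apply, kappa_single', Finsupp.smul_apply, kvec_eval]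
    by_cases h : J' = J
    · subst h; simp
    · have h0 : J' 0 ≠ J 0 := by
        intro e; apply h; funext t; rw [Subsingleton.elim t 0, e]
      rw [if_neg h0, Finsupp.single_eq_of_ne (Ne.symm h)]
      simp
  have h := LinearMap.congr_fun key x
  simp only [LinearMap.comp_apply, hx, map_zero, LinearMap.smul_apply, Finsupp.lapply_apply,
    smul_eq_mul] at h
  simpa using ((Units.mul_right_eq_zero _).1 h.symm)

theorem kappa_H (h : Fin n → ℤ) (hs : ∑ j, h j = 0) :
    kappaMap R q n ∘ₗ opH R q n 1 (fun _ => false) h =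
      opH R q n (n-1) (fun _ => true) h ∘ₗ kappaMap R q n := by
  refine Finsupp.lhom_ext' fun J => LinearMap.ext_ring ?_
  simp only [LinearMap.comp_apply, Finsupp.lsingle_apply]
  have h1 : opH R q n 1 (fun _ => false) h (Finsupp.single J 1) =
      ((q ^ (-h (J 0)) : Rˣ) : R) • Finsupp.single J 1 := by
    rw [opH, Finsupp.linearCombination_single, one_smul]
    simp
  have h2 : opH R q n (n-1) (fun _ => true) h (kvec q (J 0)) =
      ((q ^ (-h (J 0)) : Rˣ) : R) • kvec q (J 0) := by
    rw [kvec, map_sum, Finset.smul_sum]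
    refine Finset.sum_congr rfl fun w _ => ?_
    rw [map_smul, opH, Finsupp.linearCombination_single, one_smul, smul_comm]
    congr 1
    simp only [if_true, one_mul]
    rw [sum_omit (J 0) w h, hs, zero_sub]
    simp
  rw [h1, map_smul, kappa_single', map_smul, h2, smul_comm]

theorem kappa_E (a b : Fin n) (hab : (b : ℕ) = a + 1) (l : ℕ) (hl : 1 ≤ l) :
    kappaMap R q n ∘ₗ opE R q n a b 1 (fun _ => false) 0 l =
      opE R q n a b (n-1) (fun _ => true) 0 l ∘ₗ kappaMap R q n := by
  refine Finsupp.lhom_ext' fun J => LinearMap.ext_ring ?_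
  simp only [LinearMap.comp_apply, Finsupp.lsingle_apply]
  rw [kappa_single', map_smul]
  obtain _ | _ | l := l
  · omega
  · rw [zero_add, opE_dual_one]
    split_ifs with h
    · rw [map_smul, kappa_single', h, kE_a q a b hab, smul_smul, hab, pow_succ _ ((a : ℕ) + 1)]
      congr 1
      simp [mul_comm]
    · by_cases hb : J 0 = b
      · rw [hb, kE_b q a b 0]; simp
      · rw [kE_ne q a b _ hab (Ne.symm h) (Ne.symm hb)]; simp
  · rw [opE_dual_two, kE_two]; simp

theorem kappa_F (a b : Fin n) (hab : (b : ℕ) = a + 1) (l : ℕ) (hl : 1 ≤ l) :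
    kappaMap R q n ∘ₗ opF R q n a b 1 (fun _ => false) 0 l =
      opF R q n a b (n-1) (fun _ => true) 0 l ∘ₗ kappaMap R q n := by
  refine Finsupp.lhom_ext' fun J => LinearMap.ext_ring ?_
  simp only [LinearMap.comp_apply, Finsupp.lsingle_apply]
  rw [kappa_single', map_smul]
  obtain _ | _ | l := l
  · omega
  · rw [zero_add, opF_dual_one]
    split_ifs with h
    · rw [map_smul, kappa_single', h, kF_b q a b hab, smul_smul, hab, pow_succ _ ((a : ℕ) + 1)]
      congr 1
      simp [mul_comm]
    · by_cases hb : J 0 = a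
      · rw [hb, kF_a q a b 0]; simp
      · rw [kF_ne q a b _ hab (Ne.symm hb) (Ne.symm h)]; simp
  · rw [opF_dual_two, kF_two]; simp

end helpers

/-- `κ` is injective and commutes with the actions of
`K_i^{±1}`, `e_i^{(l)}` and `f_i^{(l)}` for all `1 ≤ i ≤ n−1`, `l ≥ 1`
(acting on `V*` via the antipode and on `V^{⊗(n−1)}` via iterated
comultiplication). -/
theorem stmt3 (R : Type*) [CommRing R] (q : Rˣ) (n : ℕ) (hn : 1 ≤ n) :
    Function.Injective (kappaMap R q n) ∧
    (∀ (i : Fin n) (hi : (i : ℕ) + 1 < n) (ε : ℤ), ε = 1 ∨ ε = -1 →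
      kappaMap R q n ∘ₗ
          opH R q n 1 (fun _ => false)
            (fun j => ε * (deltaZ i j - deltaZ ⟨(i : ℕ) + 1, hi⟩ j)) =
        opH R q n (n - 1) (fun _ => true)
            (fun j => ε * (deltaZ i j - deltaZ ⟨(i : ℕ) + 1, hi⟩ j)) ∘ₗ
          kappaMap R q n) ∧
    (∀ (i : Fin n) (hi : (i : ℕ) + 1 < n) (l : ℕ), 1 ≤ l →
      kappaMap R q n ∘ₗ opE R q n i ⟨(i : ℕ) + 1, hi⟩ 1 (fun _ => false) 0 l =
        opE R q n i ⟨(i : ℕ) + 1, hi⟩ (n - 1) (fun _ => true) 0 l ∘ₗ kappaMap R q n) ∧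
    (∀ (i : Fin n) (hi : (i : ℕ) + 1 < n) (l : ℕ), 1 ≤ l →
      kappaMap R q n ∘ₗ opF R q n i ⟨(i : ℕ) + 1, hi⟩ 1 (fun _ => false) 0 l =
        opF R q n i ⟨(i : ℕ) + 1, hi⟩ (n - 1) (fun _ => true) 0 l ∘ₗ kappaMap R q n) := by
  refine ⟨kappa_inj q, fun i hi ε _ => kappa_H q _ ?_, fun i hi l hl => kappa_E q _ _ rfl l hl,
    fun i hi l hl => kappa_F q _ _ rfl l hl⟩
  rw [← Finset.mul_sum, Finset.sum_sub_distrib]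
  simp [deltaZ]
end

section
/- Let m ≥ 1 and let φ ∈ End_R(V^{⊗m}) have matrix coefficients γ(i,j) ∈ R (i,j ∈ I(n,m) := {1,…,n}^m) defined by φ(v_j) = Σ_i γ(i,j)v_i. Then φ commutes with all the operators S_t (1 ≤ t ≤ m−1) if and only if for every t and all i,j ∈ I(n,m), writing a = i_t, b = i_{t+1}, c = j_t, d = j_{t+1} and letting i·s_t, j·s_t denote i, j with the entries in positions t, t+1 swapped, the following hold: γ(i,j) = q·γ(i·s_t, j) whenever a < b and c = d; γ(i,j) = q·γ(i, j·s_t) whenever a = b and c < d; γ(i,j) = γ(i·s_t, j·s_t) whenever a < b and c > d; γ(i,j) = γ(i·s_t, j·s_t) + (q−q^{−1})·γ(i, j·s_t) whenever a < b and c < d. -/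
open scoped BigOperators

/-- Tensor space `V^{⊗m}` for `V = R^n`, with basis indexed by multi-indices. -/
abbrev TSp (R : Type*) [CommRing R] (n m : ℕ) := ((Fin m → Fin n) →₀ R)

/-- The Hecke operator `S_t` (`t = p+1`, acting on tensor positions `p`, `p+1`,
0-based) on tensor space. -/
noncomputable def heckeX (R : Type*) [CommRing R] (q : Rˣ) (n m : ℕ) (p : ℕ) (hp : p + 1 < m) :
    TSp R n m →ₗ[R] TSp R n m :=
  Finsupp.linearCombination R fun j : Fin m → Fin n =>
    if j ⟨p, by omega⟩ = j ⟨p + 1, hp⟩ then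
      ((q⁻¹ : Rˣ) : R) • Finsupp.single j 1
    else if j ⟨p, by omega⟩ < j ⟨p + 1, hp⟩ then
      Finsupp.single (swapIdx j p hp) 1
    else
      Finsupp.single (swapIdx j p hp) 1 + (((q⁻¹ : Rˣ) : R) - (q : R)) • Finsupp.single j 1

theorem swapIdx_left {n m : ℕ} (j : Fin m → Fin n) (p : ℕ) (hp : p + 1 < m) :
    swapIdx j p hp ⟨p, by omega⟩ = j ⟨p + 1, hp⟩ := by
  simp [swapIdx, Function.update_apply]

theorem swapIdx_right {n m : ℕ} (j : Fin m → Fin n) (p : ℕ) (hp : p + 1 < m) :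
    swapIdx j p hp ⟨p + 1, hp⟩ = j ⟨p, by omega⟩ := by
  simp [swapIdx, Function.update_apply]

theorem swapIdx_swapIdx {n m : ℕ} (j : Fin m → Fin n) (p : ℕ) (hp : p + 1 < m) :
    swapIdx (swapIdx j p hp) p hp = j := by
  funext k
  by_cases h1 : k = ⟨p + 1, hp⟩
  · subst h1
    rw [swapIdx_right, swapIdx_left]
  · by_cases h2 : k = ⟨p, by omega⟩
    · subst h2
      rw [swapIdx_left, swapIdx_right]
    · simp [swapIdx, Function.update_apply, h1, h2]

theorem heckeX_apply (R : Type*) [CommRing R] (q : Rˣ) (n m : ℕ) (p : ℕ) (hp : p + 1 < m)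
    (x : TSp R n m) (i : Fin m → Fin n) :
    heckeX R q n m p hp x i =
      if i ⟨p, by omega⟩ = i ⟨p + 1, hp⟩ then ((q⁻¹ : Rˣ) : R) * x i
      else if i ⟨p, by omega⟩ < i ⟨p + 1, hp⟩ then x (swapIdx i p hp)
      else x (swapIdx i p hp) + (((q⁻¹ : Rˣ) : R) - (q : R)) * x i := by
  induction x using Finsupp.induction_linear with
  | zero => simp
  | add f g hf hg =>
    rw [map_add, Finsupp.add_apply, hf, hg]
    simp only [Finsupp.add_apply]
    split_ifs <;> ring
  | single j c =>
    rw [heckeX, Finsupp.linearCombination_single]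
    have hl := swapIdx_left j p hp
    have hr := swapIdx_right j p hp
    by_cases h1 : j = i
    · subst h1
      by_cases h3 : swapIdx j p hp = j
      · rw [h3] at hl
        simp [hl, mul_comm]
      · have h4 : ¬ j = swapIdx j p hp := fun h => h3 h.symm
        split_ifs <;> simp [Finsupp.single_apply, h3, h4, mul_comm]
    · by_cases h2 : swapIdx j p hp = i
      · have h5 : swapIdx i p hp = j := by rw [← h2, swapIdx_swapIdx]
        rw [h2] at hl hr
        rw [hl, hr, h5]
        rcases lt_trichotomy (j ⟨p, by omega⟩) (j ⟨p + 1, hp⟩) with h | h | h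
        · simp [h, h.ne, h.ne', h.not_gt, Finsupp.single_apply, h1, h2]
        · simp [h, Finsupp.single_apply, h1]
        · simp [h, h.ne, h.ne', h.not_gt, Finsupp.single_apply, h1, h2]
      · have h5 : ¬ j = swapIdx i p hp := fun h => h2 (by rw [h, swapIdx_swapIdx])
        split_ifs <;> simp [Finsupp.single_apply, h1, h2, h5]

theorem comm_iff (R : Type*) [CommRing R] (q : Rˣ) (n m : ℕ)
    (φ : TSp R n m →ₗ[R] TSp R n m)
    (γ : (Fin m → Fin n) → (Fin m → Fin n) → R)
    (hγ : ∀ i j, γ i j = φ (Finsupp.single j 1) i) (p : ℕ) (hp : p + 1 < m) :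
    φ ∘ₗ heckeX R q n m p hp = heckeX R q n m p hp ∘ₗ φ ↔
    ∀ i j : Fin m → Fin n,
      (if j ⟨p, by omega⟩ = j ⟨p + 1, hp⟩ then ((q⁻¹ : Rˣ) : R) * γ i j
      else if j ⟨p, by omega⟩ < j ⟨p + 1, hp⟩ then γ i (swapIdx j p hp)
      else γ i (swapIdx j p hp) + (((q⁻¹ : Rˣ) : R) - (q : R)) * γ i j) =
      (if i ⟨p, by omega⟩ = i ⟨p + 1, hp⟩ then ((q⁻¹ : Rˣ) : R) * γ i j
      else if i ⟨p, by omega⟩ < i ⟨p + 1, hp⟩ then γ (swapIdx i p hp) j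
      else γ (swapIdx i p hp) j + (((q⁻¹ : Rˣ) : R) - (q : R)) * γ i j) := by
  have key : ∀ i j : Fin m → Fin n, φ (heckeX R q n m p hp (Finsupp.single j 1)) i =
      (if j ⟨p, by omega⟩ = j ⟨p + 1, hp⟩ then ((q⁻¹ : Rˣ) : R) * γ i j
      else if j ⟨p, by omega⟩ < j ⟨p + 1, hp⟩ then γ i (swapIdx j p hp)
      else γ i (swapIdx j p hp) + (((q⁻¹ : Rˣ) : R) - (q : R)) * γ i j) := by
    intro i j
    rw [heckeX, Finsupp.linearCombination_single, one_smul]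
    split_ifs
    · rw [map_smul, Finsupp.smul_apply, smul_eq_mul, hγ]
    · rw [hγ]
    · rw [map_add, map_smul, Finsupp.add_apply, Finsupp.smul_apply, smul_eq_mul, hγ, hγ]
  constructor
  · intro h i j
    rw [← key]
    have := DFunLike.congr_fun (LinearMap.congr_fun h (Finsupp.single j 1)) i
    simp only [LinearMap.comp_apply] at this
    rw [this, heckeX_apply]
    simp only [hγ]
  · intro h
    refine Finsupp.lhom_ext' fun j => LinearMap.ext_ring ?_
    ext i
    simp only [LinearMap.comp_apply, Finsupp.lsingle_apply]
    rw [key, h, heckeX_apply]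
    simp only [hγ]

/-- an endomorphism `φ` of `V^{⊗m}` with matrix coefficients `γ`
commutes with all the operators `S_t` iff the explicit relations among the
`γ(i,j)` hold. -/
theorem stmt5 (R : Type*) [CommRing R] (q : Rˣ) (n m : ℕ) (hm : 1 ≤ m)
    (φ : TSp R n m →ₗ[R] TSp R n m)
    (γ : (Fin m → Fin n) → (Fin m → Fin n) → R)
    (hγ : ∀ i j, γ i j = φ (Finsupp.single j 1) i) :
    (∀ (p : ℕ) (hp : p + 1 < m), φ ∘ₗ heckeX R q n m p hp = heckeX R q n m p hp ∘ₗ φ) ↔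
    (∀ (p : ℕ) (hp : p + 1 < m) (i j : Fin m → Fin n),
      (i ⟨p, by omega⟩ < i ⟨p + 1, hp⟩ → j ⟨p, by omega⟩ = j ⟨p + 1, hp⟩ →
        γ i j = (q : R) * γ (swapIdx i p hp) j) ∧
      (i ⟨p, by omega⟩ = i ⟨p + 1, hp⟩ → j ⟨p, by omega⟩ < j ⟨p + 1, hp⟩ →
        γ i j = (q : R) * γ i (swapIdx j p hp)) ∧
      (i ⟨p, by omega⟩ < i ⟨p + 1, hp⟩ → j ⟨p + 1, hp⟩ < j ⟨p, by omega⟩ →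
        γ i j = γ (swapIdx i p hp) (swapIdx j p hp)) ∧
      (i ⟨p, by omega⟩ < i ⟨p + 1, hp⟩ → j ⟨p, by omega⟩ < j ⟨p + 1, hp⟩ →
        γ i j = γ (swapIdx i p hp) (swapIdx j p hp) +
          ((q : R) - ((q⁻¹ : Rˣ) : R)) * γ i (swapIdx j p hp))) := by
  have hq : (q : R) * ((q⁻¹ : Rˣ) : R) = 1 := Units.mul_inv q
  refine forall_congr' fun p => forall_congr' fun hp => ?_
  rw [comm_iff R q n m φ γ hγ p hp]
  have sl := fun j : Fin m → Fin n => swapIdx_left j p hp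
  have sr := fun j : Fin m → Fin n => swapIdx_right j p hp
  have ss := fun j : Fin m → Fin n => swapIdx_swapIdx j p hp
  constructor
  · intro H i j
    refine ⟨fun hi hj => ?_, fun hi hj => ?_, fun hi hj => ?_, fun hi hj => ?_⟩
    · have := H i j
      simp only [hj, hi, hi.ne, if_true, if_false] at this
      rw [← this, ← mul_assoc, hq, one_mul]
    · have := H i j
      simp only [hi, hj, hj.ne, if_true, if_false] at this
      rw [this, ← mul_assoc, hq, one_mul]
    · have := H i (swapIdx j p hp)
      simp only [sl, sr, ss, hi, hj, hi.ne, hj.ne, if_true, if_false] at this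
      exact this
    · have := H i (swapIdx j p hp)
      simp only [sl, sr, ss, hi, hj.ne', hj.not_gt, hi.ne, if_true, if_false] at this
      linear_combination this
  · intro H i j
    obtain ⟨a1, a2, a3, a4⟩ := H i j
    obtain ⟨b1, b2, b3, b4⟩ := H (swapIdx i p hp) j
    obtain ⟨c1, c2, c3, c4⟩ := H i (swapIdx j p hp)
    obtain ⟨d1, d2, d3, d4⟩ := H (swapIdx i p hp) (swapIdx j p hp)
    simp only [sl, sr, ss] at b1 b2 b3 b4 c1 c2 c3 c4 d1 d2 d3 d4
    rcases lt_trichotomy (i ⟨p, by omega⟩) (i ⟨p + 1, hp⟩) with hi | hi | hi <;>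
    rcases lt_trichotomy (j ⟨p, by omega⟩) (j ⟨p + 1, hp⟩) with hj | hj | hj
    · simp only [hi, hj, hi.ne, hj.ne, if_true, if_false]
      exact c3 hi hj
    · simp only [hi, hj, hi.ne, if_true, if_false]
      linear_combination ((q⁻¹ : Rˣ) : R) * a1 hi hj + γ (swapIdx i p hp) j * hq
    · simp only [hi, hi.ne, hj.ne', hj.not_gt, if_true, if_false]
      linear_combination c4 hi hj
    · simp only [hi, hj, hj.ne, if_true, if_false]
      linear_combination -((q⁻¹ : Rˣ) : R) * a2 hi hj - γ i (swapIdx j p hp) * hq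
    · simp only [hi, hj, if_true]
    · simp only [hi, hj.ne', hj.not_gt, if_true, if_false]
      linear_combination c2 hi hj
    · simp only [hj, hi.ne', hi.not_gt, hj.ne, if_true, if_false]
      linear_combination -b4 hi hj - ((q : R) - ((q⁻¹ : Rˣ) : R)) * d3 hi hj
    · simp only [hj, hi.ne', hi.not_gt, if_true, if_false]
      linear_combination -b1 hi hj
    · simp only [hi.ne', hi.not_gt, hj.ne', hj.not_gt, if_false]
      linear_combination -b3 hi hj
end

section
/- (Jacobi's Ratio Theorem, quantum version.) Let 1 ≤ l ≤ n, let i_1<…<i_l and j_1<…<j_l be increasing sequences in {1,…,n}, and let i′_1<…<i′_{n−l} and j′_1<…<j′_{n−l} be the increasing enumerations of their complements in {1,…,n}. Set y_{ab} := (−q)^{b−a}·(1…â…n | 1…b̂…n) ∈ A_q(n,n−1). Then in A_q(n, (n−1)l): Σ_{w∈S_l} (−q^{−1})^{ℓ(w)} · y_{i_{w(1)}j_1} y_{i_{w(2)}j_2} ⋯ y_{i_{w(l)}j_l} = (−q)^{Σ_{t=1}^l (j_t−i_t)} · det_q^{l−1} · (i′_1…i′_{n−l} | j′_1…j′_{n−l}).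 (Equivalently, ι applied to the starred quantum minor (i_1…i_l|j_1…j_l)* equals (−q)^{Σ(j_t−i_t)} det_q^{l−1} (i′|j′).) -/
open scoped BigOperators

/-- Ordered product of a tuple of elements in a (possibly noncommutative) monoid. -/
def oprod {A : Type*} [Monoid A] {k : ℕ} (g : Fin k → A) : A :=
  (List.ofFn g).prod

/-- The sequence `i, f 0, f 1, …` of length `n` (prepending an entry to a
sequence of length `n-1`). -/
def consSeq {n : ℕ} (i : Fin n) (f : Fin (n - 1) → Fin n) : Fin n → Fin n :=
  fun t => if h : (t : ℕ) = 0 then i else f ⟨(t : ℕ) - 1, by have := t.2; omega⟩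

/-- The defining relations of the quantum matrix bialgebra `A_q(n)`. -/
inductive QMRel (R : Type*) [CommRing R] (q : Rˣ) (n : ℕ) :
    FreeAlgebra R (Fin n × Fin n) → FreeAlgebra R (Fin n × Fin n) → Prop
  | col {i j k : Fin n} (h : i < j) :
      QMRel R q n (FreeAlgebra.ι R (i, k) * FreeAlgebra.ι R (j, k))
        ((q : R) • (FreeAlgebra.ι R (j, k) * FreeAlgebra.ι R (i, k)))
  | row {k i j : Fin n} (h : i < j) :
      QMRel R q n (FreeAlgebra.ι R (k, i) * FreeAlgebra.ι R (k, j))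
        ((q : R) • (FreeAlgebra.ι R (k, j) * FreeAlgebra.ι R (k, i)))
  | comm {i j k l : Fin n} (h1 : i < k) (h2 : l < j) :
      QMRel R q n (FreeAlgebra.ι R (i, j) * FreeAlgebra.ι R (k, l))
        (FreeAlgebra.ι R (k, l) * FreeAlgebra.ι R (i, j))
  | qcomm {i j k l : Fin n} (h1 : i < k) (h2 : j < l) :
      QMRel R q n (FreeAlgebra.ι R (i, j) * FreeAlgebra.ι R (k, l))
        (FreeAlgebra.ι R (k, l) * FreeAlgebra.ι R (i, j) +
          ((q : R) - ((q⁻¹ : Rˣ) : R)) • (FreeAlgebra.ι R (i, l) * FreeAlgebra.ι R (k, j)))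

/-- The quantum matrix bialgebra `A_q(n)`. -/
abbrev AqAlg (R : Type*) [CommRing R] (q : Rˣ) (n : ℕ) := RingQuot (QMRel R q n)

/-- The generator `x_{ij}` of `A_q(n)`. -/
def xq (R : Type*) [CommRing R] (q : Rˣ) (n : ℕ) (i j : Fin n) : AqAlg R q n :=
  RingQuot.mkAlgHom R (QMRel R q n) (FreeAlgebra.ι R (i, j))

/-- The right quantum minor `(i_1 … i_k | j_1 … j_k)_r` for an increasing row
sequence and an arbitrary column sequence. -/
noncomputable def qMinorR (R : Type*) [CommRing R] (q : Rˣ) (n : ℕ) {k : ℕ}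
    (rows cols : Fin k → Fin n) : AqAlg R q n :=
  ∑ w : Equiv.Perm (Fin k),
    (((-q) ^ invCount w : Rˣ) : R) • oprod (fun t => xq R q n (rows (w t)) (cols t))

/-- The left quantum minor `(i_1 … i_k | j_1 … j_k)_l` for an arbitrary row
sequence and an increasing column sequence. -/
noncomputable def qMinorL (R : Type*) [CommRing R] (q : Rˣ) (n : ℕ) {k : ℕ}
    (rows cols : Fin k → Fin n) : AqAlg R q n :=
  ∑ w : Equiv.Perm (Fin k),
    (((-q) ^ invCount w : Rˣ) : R) • oprod (fun t => xq R q n (rows t) (cols (w t)))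

/-- The quantum determinant. -/
noncomputable def detq (R : Type*) [CommRing R] (q : Rˣ) (n : ℕ) : AqAlg R q n :=
  qMinorR R q n (fun t => t) (fun t => t)

/-- The complementary `(n-1) × (n-1)` quantum minor `(1…î…n | 1…ĵ…n)`. -/
noncomputable def compMinor (R : Type*) [CommRing R] (q : Rˣ) (n : ℕ) (i j : Fin n) :
    AqAlg R q n :=
  qMinorR R q n (omitIdx i) (omitIdx j)

/-- The element `y_{ab} = (−q)^{b−a}·(1…â…n | 1…b̂…n)` of `A_q(n, n−1)`. -/
noncomputable def yElt (R : Type*) [CommRing R] (q : Rˣ) (n : ℕ) (a b : Fin n) :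
    AqAlg R q n :=
  (((-q) ^ ((b : ℤ) - (a : ℤ)) : Rˣ) : R) • compMinor R q n a b

section Abstract

set_option linter.unusedSectionVars false

structure IsQM {R A α β : Type*} [CommRing R] [Ring A] [Algebra R A] [LinearOrder α]
    [LinearOrder β] (q : Rˣ) (x : α → β → A) : Prop where
  col : ∀ {i j : α} {k : β}, i < j → x i k * x j k = (q : R) • (x j k * x i k)
  row : ∀ {k : α} {i j : β}, i < j → x k i * x k j = (q : R) • (x k j * x k i)
  comm : ∀ {i k : α} {j l : β}, i < k → l < j → x i j * x k l = x k l * x i j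
  qcomm : ∀ {i k : α} {j l : β}, i < k → j < l → x i j * x k l = x k l * x i j +
    ((q : R) - ((q⁻¹ : Rˣ) : R)) • (x i l * x k j)

variable {R A α β : Type*} [CommRing R] [Ring A] [Algebra R A] [LinearOrder α] [LinearOrder β]

theorem IsQM.transp {q : Rˣ} {x : α → β → A} (hx : IsQM q x) : IsQM q (fun b a => x a b) where
  col h := hx.row h
  row h := hx.col h
  comm h1 h2 := (hx.comm h2 h1).symm
  qcomm h1 h2 := by rw [hx.qcomm h2 h1, hx.comm h2 h1]

noncomputable def qM (u : R) (f : α → β → A) : List β → Finset α → A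
  | [], S => if S = ∅ then 1 else 0
  | c :: L, S => ∑ a ∈ S, u ^ (S.filter (· < a)).card • (f a c * qM u f L (S.erase a))

theorem sum_erase_pairs {M : Type*} [AddCommMonoid M] (S : Finset α) (F : α → α → M) :
    ∑ a ∈ S, ∑ b ∈ S.erase a, F a b = ∑ a ∈ S, ∑ b ∈ S.filter (a < ·), (F a b + F b a) := by
  have h1 : ∀ a ∈ S, ∑ b ∈ S.erase a, F a b =
      ∑ b ∈ S.filter (a < ·), F a b + ∑ b ∈ S.filter (· < a), F a b := by
    intro a _
    rw [← Finset.sum_union]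
    · apply Finset.sum_congr _ (fun _ _ => rfl)
      ext b
      simp only [Finset.mem_erase, Finset.mem_union, Finset.mem_filter]
      constructor
      · rintro ⟨h, hb⟩
        rcases lt_or_gt_of_ne h with h | h <;> simp [h, hb]
      · rintro (⟨hb, h⟩ | ⟨hb, h⟩)
        · exact ⟨h.ne', hb⟩
        · exact ⟨h.ne, hb⟩
    · rw [Finset.disjoint_left]
      intro b hb hb'
      simp only [Finset.mem_filter] at hb hb'
      exact lt_asymm hb.2 hb'.2
  rw [Finset.sum_congr rfl h1, Finset.sum_add_distrib]
  simp_rw [Finset.sum_add_distrib]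
  congr 1
  simp_rw [Finset.sum_filter]
  rw [Finset.sum_comm]

theorem card_filter_erase_lt {S : Finset α} {a b : α} (ha : a ∈ S) (h : a < b) :
    ((S.erase a).filter (· < b)).card + 1 = (S.filter (· < b)).card := by
  rw [Finset.filter_erase]
  rw [Finset.card_erase_add_one]
  simp [ha, h]

theorem card_filter_erase_lt' {S : Finset α} {a b : α} (h : ¬ a < b) :
    ((S.erase a).filter (· < b)).card = (S.filter (· < b)).card := by
  rw [Finset.filter_erase, Finset.erase_eq_of_notMem]
  simp [h]

theorem card_filter_erase_gt {S : Finset α} {a b : α} (ha : a ∈ S) (h : b < a) :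
    ((S.erase a).filter (b < ·)).card + 1 = (S.filter (b < ·)).card := by
  rw [Finset.filter_erase]
  rw [Finset.card_erase_add_one]
  simp [ha, h]

theorem card_filter_erase_gt' {S : Finset α} {a b : α} (h : ¬ b < a) :
    ((S.erase a).filter (b < ·)).card = (S.filter (b < ·)).card := by
  rw [Finset.filter_erase, Finset.erase_eq_of_notMem]
  simp [h]

theorem qM_two (u : R) (f : α → β → A) (c d : β) (L : List β) (S : Finset α) :
    qM u f (c :: d :: L) S = ∑ a ∈ S, ∑ b ∈ S.filter (a < ·),
      u ^ ((S.filter (· < a)).card + ((S.erase a).filter (· < b)).card) •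
        ((f a c * f b d + u • (f b c * f a d)) * qM u f L ((S.erase a).erase b)) := by
  simp only [qM, Finset.mul_sum, Finset.smul_sum]
  rw [sum_erase_pairs]
  apply Finset.sum_congr rfl
  intro a ha
  apply Finset.sum_congr rfl
  intro b hb
  simp only [Finset.mem_filter] at hb
  rw [card_filter_erase_lt' (S := S) (not_lt.mpr hb.2.le), ← card_filter_erase_lt ha hb.2,
    Finset.erase_right_comm (s := S) (a := b) (b := a)]
  simp only [add_mul, smul_add, smul_mul_assoc, mul_smul_comm, smul_smul, mul_assoc]
  congr 2 <;> ring

theorem qM_swap {q : Rˣ} {x : α → β → A} (hx : IsQM q x) {c d : β} (h : c < d) (L : List β)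
    (S : Finset α) :
    qM (-(q : R)) x (d :: c :: L) S = (-(q : R)) • qM (-(q : R)) x (c :: d :: L) S := by
  rw [qM_two, qM_two, Finset.smul_sum]
  apply Finset.sum_congr rfl
  intro a ha
  rw [Finset.smul_sum]
  apply Finset.sum_congr rfl
  intro b hb
  simp only [Finset.mem_filter] at hb
  rw [smul_comm (-(q : R)), ← smul_mul_assoc (-(q : R)) (_ + _)]
  congr 2
  rw [hx.qcomm hb.2 h, ← hx.comm hb.2 h]
  simp only [smul_add, smul_smul]
  have : (-(q:R)) * (q - ((q⁻¹ : Rˣ) : R)) = 1 - q * q := by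
    rw [mul_sub, neg_mul, neg_mul, Units.mul_inv]; ring
  rw [this, neg_mul_neg, sub_smul, one_smul]
  abel

theorem qM_same {q : Rˣ} {x : α → β → A} (hx : IsQM q x) {c : β} (L : List β)
    (S : Finset α) :
    qM (-(q : R)) x (c :: c :: L) S = 0 := by
  rw [qM_two]
  refine Finset.sum_eq_zero fun a ha => Finset.sum_eq_zero fun b hb => ?_
  simp only [Finset.mem_filter] at hb
  rw [hx.col hb.2]
  simp

theorem qM_cons_congr (u : R) (f : α → β → A) (c : β) {L L' : List β} {v : R}
    (h : ∀ S, qM u f L S = v • qM u f L' S) (S : Finset α) :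
    qM u f (c :: L) S = v • qM u f (c :: L') S := by
  simp only [qM, h, Finset.smul_sum, mul_smul_comm]
  exact Finset.sum_congr rfl fun a _ => smul_comm _ _ _

theorem qM_insert {q : Rˣ} {x : α → β → A} (hx : IsQM q x) (c : β) : ∀ (L : List β),
    L.Pairwise (· < ·) → ∀ S : Finset α, (c ∉ L → qM (-(q : R)) x (c :: L) S =
      (-(q : R)) ^ (L.filter (· < c)).length • qM (-(q : R)) x (L.orderedInsert (· ≤ ·) c) S) ∧
      (c ∈ L → qM (-(q : R)) x (c :: L) S = 0) := by
  intro L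
  induction L with
  | nil => intro _ S; simp
  | cons d L ih =>
    intro hL S
    rw [List.pairwise_cons] at hL
    have ih := ih hL.2
    rcases lt_trichotomy c d with h | h | h
    · refine ⟨fun _ => ?_, fun hc => ?_⟩
      · rw [List.orderedInsert_cons_of_le _ _ h.le, List.filter_eq_nil_iff.mpr]
        · simp
        · intro a ha
          rcases List.mem_cons.mp ha with rfl | ha
          · simpa using h.le
          · simpa using (h.trans (hL.1 a ha)).le
      · rcases List.mem_cons.mp hc with rfl | hc
        · exact absurd h (lt_irrefl _)
        · exact absurd (h.trans (hL.1 c hc)) (lt_irrefl _)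
    · subst h
      exact ⟨fun hc => absurd List.mem_cons_self hc, fun _ => qM_same hx _ _⟩
    · rw [qM_swap hx h]
      refine ⟨fun hc => ?_, fun hc => ?_⟩
      · have hc' : c ∉ L := fun h' => hc (List.mem_cons_of_mem _ h')
        rw [List.orderedInsert_of_not_le _ _ (not_le.mpr h),
          qM_cons_congr _ _ d (fun S => (ih S).1 hc'), smul_smul, List.filter_cons_of_pos (by simpa using h),
          List.length_cons, pow_succ']
      · have hc' : c ∈ L := (List.mem_cons.mp hc).resolve_left h.ne'
        rw [qM_cons_congr _ _ d (L' := c :: L) (v := 0) (fun S => by rw [(ih S).2 hc', zero_smul])]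
        simp

theorem qM_append {q : Rˣ} {x : α → β → A} (hx : IsQM q x) (c : β) : ∀ (L : List β),
    L.Pairwise (· < ·) → ∀ S : Finset α, (c ∉ L → qM (-(q : R)) x (L ++ [c]) S =
      (-(q : R)) ^ (L.filter (c < ·)).length • qM (-(q : R)) x (L.orderedInsert (· ≤ ·) c) S) ∧
      (c ∈ L → qM (-(q : R)) x (L ++ [c]) S = 0) := by
  intro L
  induction L with
  | nil => intro _ S; simp
  | cons d L ih =>
    intro hL S
    rw [List.pairwise_cons] at hL
    have ih := ih hL.2
    have hoi : ∀ {c}, (∀ a ∈ L, c < a) → L.orderedInsert (· ≤ ·) c = c :: L := by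
      intro c hc
      cases L with
      | nil => rfl
      | cons e L => exact List.orderedInsert_cons_of_le _ _ (hc e List.mem_cons_self).le
    rw [List.cons_append]
    rcases lt_trichotomy c d with h | h | h
    · refine ⟨fun hc => ?_, fun hc => ?_⟩
      · have hc' : c ∉ L := fun h' => hc (List.mem_cons_of_mem _ h')
        rw [List.orderedInsert_cons_of_le _ _ h.le, qM_cons_congr _ _ d (fun S => (ih S).1 hc'),
          hoi fun a ha => h.trans (hL.1 a ha), qM_swap hx h, List.filter_cons_of_pos (by simpa using h),
          List.length_cons, pow_succ, smul_smul]
      · rcases List.mem_cons.mp hc with rfl | hc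
        · exact absurd h (lt_irrefl _)
        · exact absurd (h.trans (hL.1 c hc)) (lt_irrefl _)
    · subst h
      have hc' : c ∉ L := fun h' => lt_irrefl _ (hL.1 c h')
      refine ⟨fun hc => absurd List.mem_cons_self hc, fun _ => ?_⟩
      rw [qM_cons_congr _ _ c (fun S => (ih S).1 hc'), hoi hL.1, qM_same hx, smul_zero]
    · refine ⟨fun hc => ?_, fun hc => ?_⟩
      · have hc' : c ∉ L := fun h' => hc (List.mem_cons_of_mem _ h')
        rw [List.orderedInsert_of_not_le _ _ (not_le.mpr h),
          qM_cons_congr _ _ d (fun S => (ih S).1 hc'),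
          List.filter_cons_of_neg (by simpa using h.le)]
      · have hc' : c ∈ L := (List.mem_cons.mp hc).resolve_left h.ne'
        rw [qM_cons_congr _ _ d (L' := c :: L) (v := 0) (fun S => by rw [(ih S).2 hc', zero_smul])]
        simp

theorem qM_append_expand (u : R) (f : α → β → A) (c : β) : ∀ (L : List β) (S : Finset α),
    qM u f (L ++ [c]) S = ∑ a ∈ S, u ^ (S.filter (a < ·)).card • (qM u f L (S.erase a) * f a c) := by
  intro L
  induction L with
  | nil =>
    intro S
    simp only [List.nil_append, qM]
    apply Finset.sum_congr rfl
    intro a ha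
    by_cases h : S.erase a = ∅
    · have : S = {a} := by
        rw [← Finset.insert_erase ha, h]; rfl
      subst this
      simp [Finset.filter_singleton]
    · simp [h]
  | cons d L ih =>
    intro S
    rw [List.cons_append]
    simp only [qM, ih, Finset.mul_sum, Finset.smul_sum, Finset.sum_mul]
    rw [Finset.sum_comm' (t' := S) (s' := fun y => S.erase y)]
    · apply Finset.sum_congr rfl
      intro a ha
      apply Finset.sum_congr rfl
      intro b hb
      rw [Finset.mem_erase] at hb
      rw [Finset.erase_right_comm (s := S) (a := b) (b := a)]
      simp only [smul_mul_assoc, mul_smul_comm, smul_smul, mul_assoc, ← pow_add]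
      congr 2
      rcases lt_or_gt_of_ne hb.1 with h | h
      · rw [card_filter_erase_gt' (not_lt.mpr h.le), card_filter_erase_lt' (not_lt.mpr h.le)]
        ring
      · have := card_filter_erase_gt hb.2 h
        have := card_filter_erase_lt ha h
        omega
    · intro a b
      simp only [Finset.mem_erase]
      constructor
      · rintro ⟨h1, h2, h3⟩; exact ⟨⟨fun h => h2 h.symm, h1⟩, h3⟩
      · rintro ⟨⟨h1, h2⟩, h3⟩; exact ⟨h2, fun h => h1 h.symm, h3⟩

theorem sort_unique {L : List β} (h : L.Pairwise (· < ·)) {T : Finset β}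
    (hT : ∀ b, b ∈ L ↔ b ∈ T) : L = T.sort := by
  apply List.Perm.eq_of_pairwise' (r := (· ≤ ·)) (h.imp le_of_lt) (Finset.pairwise_sort _ _)
  rw [List.perm_ext_iff_of_nodup (h.imp ne_of_lt) (Finset.sort_nodup _ _)]
  simpa using hT

theorem sort_pw (T : Finset β) : (T.sort).Pairwise (· < ·) := (Finset.sortedLT_sort T).pairwise

theorem sort_orderedInsert {c : β} {T : Finset β} (hc : c ∉ T) :
    (T.sort).orderedInsert (· ≤ ·) c = (insert c T).sort := by
  apply List.Perm.eq_of_pairwise' (r := (· ≤ ·))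
  · exact List.Pairwise.orderedInsert _ _ (Finset.pairwise_sort _ _)
  · exact Finset.pairwise_sort _ _
  rw [List.perm_ext_iff_of_nodup _ (Finset.sort_nodup _ _)]
  · simp [List.mem_orderedInsert]
  · rw [(List.perm_orderedInsert _ _ _).nodup_iff]
    simp [hc, Finset.sort_nodup]

theorem sort_filter_length (T : Finset β) (p : β → Prop) [DecidablePred p] :
    ((T.sort).filter (fun b => decide (p b))).length = (T.filter p).card := by
  rw [← List.toFinset_card_of_nodup ((Finset.sort_nodup _ _).filter _)]
  congr 1
  ext b
  simp

noncomputable def qm (u : R) (f : α → β → A) (S : Finset α) (T : Finset β) : A :=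
  qM u f T.sort S

theorem qm_cons {q : Rˣ} {x : α → β → A} (hx : IsQM q x) (c : β) (T : Finset β) (S : Finset α) :
    ∑ a ∈ S, (-(q : R)) ^ (S.filter (· < a)).card • (x a c * qm (-(q : R)) x (S.erase a) T) =
    if c ∈ T then 0 else (-(q : R)) ^ (T.filter (· < c)).card • qm (-(q : R)) x S (insert c T) := by
  have := qM_insert hx c T.sort (sort_pw T) S
  split_ifs with h
  · exact this.2 (by simpa using h)
  · rw [qm, ← sort_orderedInsert h, ← sort_filter_length]
    exact this.1 (by simpa using h)

theorem qm_append {q : Rˣ} {x : α → β → A} (hx : IsQM q x) (c : β) (T : Finset β) (S : Finset α) :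
    ∑ a ∈ S, (-(q : R)) ^ (S.filter (a < ·)).card • (qm (-(q : R)) x (S.erase a) T * x a c) =
    if c ∈ T then 0 else (-(q : R)) ^ (T.filter (c < ·)).card • qm (-(q : R)) x S (insert c T) := by
  have := qM_append hx c T.sort (sort_pw T) S
  simp only [qm]
  rw [← qM_append_expand]
  split_ifs with h
  · exact this.2 (by simpa using h)
  · rw [← sort_orderedInsert h, ← sort_filter_length]
    exact this.1 (by simpa using h)

/-- first-column expansion -/
theorem qm_min (u : R) (f : α → β → A) {S : Finset α} {T : Finset β} {t : β} (ht : t ∈ T)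
    (hmin : ∀ b ∈ T, t ≤ b) :
    qm u f S T = ∑ a ∈ S, u ^ (S.filter (· < a)).card • (f a t * qm u f (S.erase a) (T.erase t)) := by
  conv_lhs => rw [← Finset.insert_erase ht]
  rw [qm, Finset.sort_insert _ (fun b hb => hmin b (Finset.mem_of_mem_erase hb)) (Finset.notMem_erase _ _)]
  rfl

theorem qm_transp {q : Rˣ} {x : α → β → A} (hx : IsQM q x) : ∀ (k : ℕ) (S : Finset α)
    (T : Finset β), S.card = k → T.card = k →
    qm (-(q : R)) x S T = qm (-(q : R)) (fun b a => x a b) T S := by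
  intro k
  induction k using Nat.strong_induction_on with
  | _ k ih =>
  intro S T hS hT
  rcases Nat.eq_zero_or_pos k with hk | hk
  · subst hk
    rw [Finset.card_eq_zero] at hS hT
    subst hS hT
    simp [qm, qM]
  obtain ⟨s, hs, hsm⟩ := S.exists_min_image id (Finset.card_pos.mp (by omega))
  obtain ⟨t, ht, htm⟩ := T.exists_min_image id (Finset.card_pos.mp (by omega))
  simp only [id] at hsm htm
  have hcS : ∀ a ∈ S, (S.erase a).card = k - 1 := fun a ha => by
    rw [Finset.card_erase_of_mem ha]; omega
  have hcT : ∀ a ∈ T, (T.erase a).card = k - 1 := fun a ha => by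
    rw [Finset.card_erase_of_mem ha]; omega
  rw [qm_min _ _ ht htm, qm_min _ _ hs hsm]
  rw [← Finset.add_sum_erase _ _ hs, ← Finset.add_sum_erase _ _ ht]
  have e1 : (S.filter (· < s)).card = 0 := by
    rw [Finset.card_eq_zero, Finset.filter_eq_empty_iff]
    exact fun a ha => not_lt.mpr (hsm a ha)
  have e2 : (T.filter (· < t)).card = 0 := by
    rw [Finset.card_eq_zero, Finset.filter_eq_empty_iff]
    exact fun a ha => not_lt.mpr (htm a ha)
  rw [e1, e2, ih (k - 1) (by omega) _ _ (hcS s hs) (hcT t ht)]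
  congr 1
  have h1 : ∀ a ∈ S.erase s, (-(q:R)) ^ (S.filter (· < a)).card •
      (x a t * qm (-(q : R)) x (S.erase a) (T.erase t)) =
      ∑ b ∈ T.erase t, (-(q:R)) ^ ((S.filter (· < a)).card + ((T.erase t).filter (· < b)).card) •
      (x a t * (x s b * qm (-(q : R)) x ((S.erase a).erase s) ((T.erase t).erase b))) := by
    intro a ha
    rw [Finset.mem_erase] at ha
    rw [ih (k - 1) (by omega) _ _ (hcS a ha.2) (hcT t ht),
      qm_min _ _ (t := s) (Finset.mem_erase.mpr ⟨fun h => ha.1 h.symm, hs⟩)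
        (fun b hb => hsm b (Finset.mem_of_mem_erase hb)), Finset.mul_sum, Finset.smul_sum]
    apply Finset.sum_congr rfl
    intro b hb
    have c1 : ((S.erase a).erase s).card = k - 1 - 1 := by
      rw [Finset.card_erase_of_mem (Finset.mem_erase.mpr ⟨fun h => ha.1 h.symm, hs⟩), hcS a ha.2]
    have c2 : ((T.erase t).erase b).card = k - 1 - 1 := by
      rw [Finset.card_erase_of_mem hb, hcT t ht]
    rw [mul_smul_comm, smul_smul, pow_add, ih (k - 1 - 1) (by omega) _ _ c1 c2]
  have h2 : ∀ b ∈ T.erase t, (-(q:R)) ^ (T.filter (· < b)).card •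
      (x s b * qm (-(q : R)) (fun b a => x a b) (T.erase b) (S.erase s)) =
      ∑ a ∈ S.erase s, (-(q:R)) ^ ((T.filter (· < b)).card + ((S.erase s).filter (· < a)).card) •
      (x s b * (x a t * qm (-(q : R)) x ((S.erase s).erase a) ((T.erase b).erase t))) := by
    intro b hb
    rw [Finset.mem_erase] at hb
    rw [← ih (k - 1) (by omega) _ _ (hcS s hs) (hcT b hb.2),
      qm_min _ _ (t := t) (Finset.mem_erase.mpr ⟨fun h => hb.1 h.symm, ht⟩)
        (fun b hb => htm b (Finset.mem_of_mem_erase hb)), Finset.mul_sum, Finset.smul_sum]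
    apply Finset.sum_congr rfl
    intro a ha
    rw [mul_smul_comm, smul_smul, pow_add]
  rw [Finset.sum_congr rfl h1, Finset.sum_congr rfl h2, Finset.sum_comm]
  apply Finset.sum_congr rfl
  intro b hb
  apply Finset.sum_congr rfl
  intro a ha
  rw [Finset.mem_erase] at ha hb
  have hsa : s < a := lt_of_le_of_ne (hsm a ha.2) (fun h => ha.1 h.symm)
  have htb : t < b := lt_of_le_of_ne (htm b hb.2) (fun h => hb.1 h.symm)
  rw [← mul_assoc, ← mul_assoc, hx.comm hsa htb, Finset.erase_right_comm (s := S) (a := a) (b := s),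
    Finset.erase_right_comm (s := T) (a := b) (b := t)]
  congr 2
  have := card_filter_erase_lt hs hsa
  have := card_filter_erase_lt ht htb
  omega

end Abstract

section Bridge

variable {R A α β : Type*} [CommRing R] [Ring A] [Algebra R A] [LinearOrder α] [LinearOrder β]

theorem insPerm_inj {k : ℕ} (a : Fin (k + 1)) (σ : Equiv.Perm (Fin k)) :
    Function.Injective (Fin.cons a (fun t => a.succAbove (σ t)) : Fin (k + 1) → Fin (k + 1)) := by
  rw [Fin.cons_injective_iff]
  refine ⟨?_, fun s t h => σ.injective (Fin.succAbove_right_injective h)⟩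
  rintro ⟨t, ht⟩
  exact Fin.succAbove_ne _ _ ht

noncomputable def insPerm {k : ℕ} (a : Fin (k + 1)) (σ : Equiv.Perm (Fin k)) :
    Equiv.Perm (Fin (k + 1)) :=
  Equiv.ofBijective _ (Finite.injective_iff_bijective.mp (insPerm_inj a σ))

@[simp] theorem insPerm_zero {k : ℕ} (a : Fin (k + 1)) (σ : Equiv.Perm (Fin k)) :
    insPerm a σ 0 = a := rfl

@[simp] theorem insPerm_succ {k : ℕ} (a : Fin (k + 1)) (σ : Equiv.Perm (Fin k)) (t : Fin k) :
    insPerm a σ t.succ = a.succAbove (σ t) := rfl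

theorem insPerm_bij (k : ℕ) : Function.Bijective
    (fun p : Fin (k + 1) × Equiv.Perm (Fin k) => insPerm p.1 p.2) := by
  rw [Fintype.bijective_iff_injective_and_card]
  constructor
  · rintro ⟨a, σ⟩ ⟨b, τ⟩ h
    simp only at h
    have h0 : a = b := by rw [← insPerm_zero a σ, h, insPerm_zero]
    subst h0
    congr 1
    ext t
    have := congrArg (fun w => w t.succ) h
    simp only [insPerm_succ] at this
    rw [Fin.succAbove_right_injective this]
  · simp [Fintype.card_perm, Nat.factorial_succ]

theorem invCount_insPerm {k : ℕ} (a : Fin (k + 1)) (σ : Equiv.Perm (Fin k)) :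
    invCount (insPerm a σ) = a + invCount σ := by
  have ha : ∑ t : Fin k, (if (a.succAbove (σ t)) < a then 1 else 0) = (a : ℕ) := by
    rw [Equiv.sum_comp σ (fun t => if (a.succAbove t) < a then 1 else 0)]
    simp only [Fin.succAbove_lt_iff_castSucc_lt]
    rw [← Finset.card_filter]
    have : (Finset.univ.filter (fun t : Fin k => t.castSucc < a)).map Fin.valEmbedding =
        Finset.range a := by
      ext m
      simp only [Finset.mem_map, Finset.mem_filter, Finset.mem_univ, true_and, Finset.mem_range,
        Fin.valEmbedding_apply, Fin.lt_def, Fin.val_castSucc]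
      constructor
      · rintro ⟨t, h, rfl⟩; exact h
      · intro h; exact ⟨⟨m, by omega⟩, h, rfl⟩
    rw [← Finset.card_map, this, Finset.card_range]
  simp only [invCount, Finset.card_filter, Fintype.sum_prod_type]
  rw [Fin.sum_univ_succ, Fin.sum_univ_succ]
  simp only [Fin.sum_univ_succ (n := k), insPerm_zero, insPerm_succ]
  simp [Fin.succAbove_lt_succAbove_iff, ha, Fin.succ_lt_succ_iff]

theorem bridge (u : R) (f : α → β → A) : ∀ (k : ℕ) (r : Fin k → α) (_ : StrictMono r)
    (c : Fin k → β),
    ∑ w : Equiv.Perm (Fin k), u ^ invCount w • oprod (fun t => f (r (w t)) (c t)) =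
      qM u f (List.ofFn c) (Finset.univ.image r) := by
  intro k
  induction k with
  | zero =>
    intro r _ c
    simp [qM, oprod, invCount]
  | succ k ih =>
    intro r hr c
    rw [← Function.Bijective.sum_comp (insPerm_bij k), Fintype.sum_prod_type, List.ofFn_succ, qM,
      Finset.sum_image (fun a _ b _ h => hr.injective h)]
    apply Finset.sum_congr rfl
    intro a _
    have e1 : ((Finset.univ.image r).filter (· < r a)).card = a := by
      have : (Finset.univ.image r).filter (· < r a) = (Finset.Iio a).image r := by
        ext z
        simp only [Finset.mem_filter, Finset.mem_image, Finset.mem_univ, true_and, Finset.mem_Iio]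
        constructor
        · rintro ⟨⟨b, rfl⟩, h⟩; exact ⟨b, hr.lt_iff_lt.mp h, rfl⟩
        · rintro ⟨b, h, rfl⟩; exact ⟨⟨b, rfl⟩, hr h⟩
      rw [this, Finset.card_image_of_injective _ hr.injective, Fin.card_Iio]
    have e2 : (Finset.univ.image r).erase (r a) = Finset.univ.image (fun t => r (a.succAbove t)) := by
      ext z
      simp only [Finset.mem_erase, Finset.mem_image, Finset.mem_univ, true_and]
      constructor
      · rintro ⟨h, b, rfl⟩
        obtain ⟨t, ht⟩ := Fin.exists_succAbove_eq (x := b) (y := a) (fun h' => h (by rw [h']))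
        exact ⟨t, by rw [ht]⟩
      · rintro ⟨t, rfl⟩
        exact ⟨fun h => Fin.succAbove_ne _ _ (hr.injective h), _, rfl⟩
    rw [e1, e2, ← ih (fun t => r (a.succAbove t)) (hr.comp (Fin.strictMono_succAbove a)), Finset.mul_sum, Finset.smul_sum]
    apply Finset.sum_congr rfl
    intro σ _
    rw [invCount_insPerm, oprod, List.ofFn_succ, List.prod_cons, mul_smul_comm, smul_smul, pow_add]
    rfl

theorem ofFn_sort {k : ℕ} {c : Fin k → β} (hc : StrictMono c) :
    List.ofFn c = (Finset.univ.image c).sort := by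
  apply sort_unique hc.sortedLT_ofFn.pairwise
  simp [List.mem_ofFn]

theorem bridge' (u : R) (f : α → β → A) {k : ℕ} {r : Fin k → α} (hr : StrictMono r)
    {c : Fin k → β} (hc : StrictMono c) :
    ∑ w : Equiv.Perm (Fin k), u ^ invCount w • oprod (fun t => f (r (w t)) (c t)) =
      qm u f (Finset.univ.image r) (Finset.univ.image c) := by
  rw [bridge u f k r hr c, qm, ofFn_sort hc]

end Bridge

section Main

variable {R A : Type*} [CommRing R] [Ring A] [Algebra R A] {n : ℕ}

theorem commute_qM {α β : Type*} [LinearOrder α] (u : R) (f : α → β → A) (D : A)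
    (h : ∀ a b, Commute D (f a b)) :
    ∀ (L : List β) (S : Finset α), Commute D (qM u f L S) := by
  intro L
  induction L with
  | nil => intro S; rw [qM]; split_ifs <;> simp
  | cons c L ih =>
    intro S
    rw [qM]
    exact Commute.sum_right _ _ _ fun a _ => ((h a c).mul_right (ih _)).smul_right _

noncomputable def qD (q : Rˣ) (x : Fin n → Fin n → A) : A :=
  qm (-(q : R)) x Finset.univ Finset.univ

noncomputable def qY (q : Rˣ) (x : Fin n → Fin n → A) (a b : Fin n) : A :=
  (((-q) ^ ((b : ℤ) - (a : ℤ)) : Rˣ) : R) •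
    qm (-(q : R)) x (Finset.univ.erase a) (Finset.univ.erase b)

theorem card_gt_univ (a : Fin n) : ((Finset.univ : Finset (Fin n)).filter (a < ·)).card = n - 1 - a := by
  rw [← Fin.card_Ioi a]; congr 1; ext; simp

theorem card_lt_univ (a : Fin n) : ((Finset.univ : Finset (Fin n)).filter (· < a)).card = a := by
  rw [← Fin.card_Iio a]; congr 1; ext; simp

theorem upow (q : Rˣ) (m : ℕ) : (-(q : R)) ^ m = (((-q) ^ (m : ℤ) : Rˣ) : R) := by
  simp

theorem qYX {q : Rˣ} {x : Fin n → Fin n → A} (hx : IsQM q x) (b c : Fin n) :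
    ∑ a, qY q x a b * x a c = if b = c then qD q x else 0 := by
  have h := qm_append hx c (Finset.univ.erase b) Finset.univ
  have key : ∑ a, qY q x a b * x a c = (((-q) ^ ((b : ℤ) - (n - 1 : ℤ)) : Rˣ) : R) •
      ∑ a, (-(q : R)) ^ ((Finset.univ : Finset (Fin n)).filter (a < ·)).card •
        (qm (-(q : R)) x (Finset.univ.erase a) (Finset.univ.erase b) * x a c) := by
    rw [Finset.smul_sum]
    apply Finset.sum_congr rfl
    intro a _
    rw [qY, card_gt_univ, upow, smul_smul, ← Units.val_mul, ← zpow_add, smul_mul_assoc]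
    congr 4
    have := a.2
    omega
  rw [key, h]
  by_cases hbc : b = c
  · subst hbc
    rw [if_neg (by simp), if_pos rfl, card_filter_erase_gt' (lt_irrefl _), card_gt_univ, upow,
      smul_smul, ← Units.val_mul, ← zpow_add, Finset.insert_erase (Finset.mem_univ _)]
    have : (b : ℤ) - (n - 1 : ℤ) + ((n - 1 - b : ℕ) : ℤ) = 0 := by
      have := b.2
      omega
    rw [this]
    simp [qD]
  · rw [if_pos (by simpa using fun h => hbc h.symm), if_neg hbc, smul_zero]

theorem qXY {q : Rˣ} {x : Fin n → Fin n → A} (hx : IsQM q x) (c a : Fin n) :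
    ∑ b, x c b * qY q x a b = if c = a then qD q x else 0 := by
  have h := qm_cons hx.transp c (Finset.univ.erase a) Finset.univ
  have key : ∑ b, x c b * qY q x a b = (((-q) ^ (-(a : ℤ)) : Rˣ) : R) •
      ∑ b, (-(q : R)) ^ ((Finset.univ : Finset (Fin n)).filter (· < b)).card •
        (x c b * qm (-(q : R)) (fun b a => x a b) (Finset.univ.erase b) (Finset.univ.erase a)) := by
    rw [Finset.smul_sum]
    apply Finset.sum_congr rfl
    intro b _
    rw [qY, card_lt_univ, upow, smul_smul, ← Units.val_mul, ← zpow_add, mul_smul_comm,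
      qm_transp hx (n - 1) _ _ (by simp [Finset.card_erase_of_mem]) (by simp [Finset.card_erase_of_mem])]
    congr 4
    omega
  rw [key, h]
  by_cases hbc : c = a
  · subst hbc
    rw [if_neg (by simp), if_pos rfl, card_filter_erase_lt' (lt_irrefl _), card_lt_univ, upow,
      smul_smul, ← Units.val_mul, ← zpow_add, Finset.insert_erase (Finset.mem_univ _),
      ← qm_transp hx n _ _ (by simp) (by simp)]
    simp [qD]
  · rw [if_pos (by simpa using hbc), if_neg hbc, smul_zero]

theorem qD_comm {q : Rˣ} {x : Fin n → Fin n → A} (hx : IsQM q x) (c d : Fin n) :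
    Commute (qD q x) (x c d) := by
  have h1 : ∑ b, x c b * ∑ a, qY q x a b * x a d = x c d * qD q x := by
    simp [qYX hx]
  have h2 : ∑ a, (∑ b, x c b * qY q x a b) * x a d = qD q x * x c d := by
    simp [qXY hx]
  rw [Commute, SemiconjBy, ← h1, ← h2]
  simp only [Finset.mul_sum, Finset.sum_mul, mul_assoc]
  exact Finset.sum_comm

theorem jac_step {q : Rˣ} {x : Fin n → Fin n → A} (hx : IsQM q x) (S K : Finset (Fin n))
    (hK : K.card = Sᶜ.card + 1) (t : Fin n) (ht : t ∈ K) :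
    ∑ a ∈ S, (-(q : R)) ^ (Sᶜ.filter (· < a)).card • (qY q x a t * qm (-(q : R)) x (insert a Sᶜ) K) =
    (-(q : R)) ^ (K.filter (· < t)).card • (qD q x * qm (-(q : R)) x Sᶜ (K.erase t)) := by
  have h := fun a => qm_cons hx.transp a Sᶜ K
  have e : ∑ a, qY q x a t * (∑ c ∈ K, (-(q : R)) ^ (K.filter (· < c)).card •
      (x a c * qm (-(q : R)) (fun b a => x a b) (K.erase c) Sᶜ)) =
      (-(q : R)) ^ (K.filter (· < t)).card • (qD q x * qm (-(q : R)) x Sᶜ (K.erase t)) := by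
    simp only [Finset.mul_sum]
    rw [Finset.sum_comm]
    rw [qm_transp hx Sᶜ.card _ _ rfl (by rw [Finset.card_erase_of_mem ht]; omega)]
    rw [Finset.sum_eq_single_of_mem t ht]
    · simp only [mul_smul_comm, ← mul_assoc]
      rw [← Finset.smul_sum, ← Finset.sum_mul, qYX hx, if_pos rfl]
    · intro c _ hc
      simp only [mul_smul_comm, ← mul_assoc]
      rw [← Finset.smul_sum, ← Finset.sum_mul, qYX hx, if_neg (fun h => hc h.symm)]
      simp
  rw [← e]
  simp only [h]
  rw [← Finset.sum_subset (Finset.subset_univ S)]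
  · apply Finset.sum_congr rfl
    intro a ha
    have : a ∉ Sᶜ := by simpa using ha
    rw [if_neg this, mul_smul_comm, qm_transp hx K.card _ _ (by rw [Finset.card_insert_of_notMem this, hK]) rfl]
  · intro a _ ha
    rw [if_pos (by simpa using ha), mul_zero]

theorem jacobi {q : Rˣ} {x : Fin n → Fin n → A} (hx : IsQM q x) : ∀ (l : ℕ)
    (S T : Finset (Fin n)), S.card = l + 1 → T.card = l + 1 →
    qm (((-q)⁻¹ : Rˣ) : R) (qY q x) S T =
      (((-q) ^ (∑ t ∈ T, (t : ℤ) - ∑ s ∈ S, (s : ℤ)) : Rˣ) : R) •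
        (qD q x ^ l * qm (-(q : R)) x Sᶜ Tᶜ) := by
  intro l
  induction l with
  | zero =>
    intro S T hS hT
    obtain ⟨a, rfl⟩ := Finset.card_eq_one.mp hS
    obtain ⟨b, rfl⟩ := Finset.card_eq_one.mp hT
    rw [qm, Finset.sort_singleton]
    simp [qM, qY, Finset.filter_singleton, Finset.compl_singleton]
  | succ l ih =>
    intro S T hS hT
    obtain ⟨t, ht, htm⟩ := T.exists_min_image id (Finset.card_pos.mp (by omega))
    simp only [id] at htm
    rw [qm_min _ _ ht htm]
    have hcomm : ∀ a, Commute (qD q x ^ l) (qY q x a t) := fun a =>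
      ((commute_qM _ _ _ (qD_comm hx) _ _).smul_right _).pow_left _
    have hT' : (T.erase t)ᶜ.erase t = Tᶜ := by
      ext z; simp only [Finset.mem_erase, Finset.mem_compl]
      constructor
      · rintro ⟨h1, h2⟩ h3; exact h2 ⟨h1, h3⟩
      · intro h; exact ⟨fun h' => h (h' ▸ ht), fun h' => h h'.2⟩
    have hlt : ((T.erase t)ᶜ.filter (· < t)).card = t := by
      rw [← card_lt_univ t]
      congr 1
      ext z
      simp only [Finset.mem_filter, Finset.mem_compl, Finset.mem_erase, Finset.mem_univ, true_and,
        and_iff_right_iff_imp]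
      intro h h'
      exact absurd (htm z h'.2) (not_le.mpr h)
    have hcard : (T.erase t)ᶜ.card = Sᶜ.card + 1 := by
      rw [Finset.card_compl, Finset.card_compl, Finset.card_erase_of_mem ht, hS, hT]
      have := Finset.card_le_univ S
      simp only [Fintype.card_fin] at *
      omega
    have st := jac_step hx S (T.erase t)ᶜ hcard t (by simp)
    rw [hT', hlt] at st
    have key : ∀ a ∈ S, (((-q)⁻¹ : Rˣ) : R) ^ (S.filter (· < a)).card •
        (qY q x a t * qm (((-q)⁻¹ : Rˣ) : R) (qY q x) (S.erase a) (T.erase t)) =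
        (((-q) ^ (∑ t ∈ T, (t : ℤ) - t - ∑ s ∈ S, (s : ℤ)) : Rˣ) : R) • (qD q x ^ l *
        ((-(q : R)) ^ (Sᶜ.filter (· < a)).card •
          (qY q x a t * qm (-(q : R)) x (insert a Sᶜ) (T.erase t)ᶜ))) := by
      intro a ha
      rw [ih _ _ (by rw [Finset.card_erase_of_mem ha]; omega)
        (by rw [Finset.card_erase_of_mem ht]; omega)]
      have hS' : (S.erase a)ᶜ = insert a Sᶜ := by
        ext z; simp only [Finset.mem_insert, Finset.mem_erase, Finset.mem_compl]; tauto
      have hcnt : (S.filter (· < a)).card + (Sᶜ.filter (· < a)).card = a := by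
        rw [← card_lt_univ a, ← Finset.card_union_of_disjoint, ← Finset.filter_union,
          Finset.union_compl]
        exact Finset.disjoint_filter_filter disjoint_compl_right
      rw [hS', upow, mul_smul_comm, mul_smul_comm, smul_smul, smul_smul, ← mul_assoc, ← mul_assoc,
        (hcomm a).eq, ← Units.val_pow_eq_pow_val, ← Units.val_mul, ← Units.val_mul, inv_pow,
        ← zpow_natCast, ← zpow_neg, ← zpow_add, ← zpow_add,
        Finset.sum_erase_eq_sub ha, Finset.sum_erase_eq_sub ht]
      congr 3
      omega
    rw [Finset.sum_congr rfl key, ← Finset.smul_sum, ← Finset.mul_sum, st, upow, mul_smul_comm,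
      smul_smul, ← Units.val_mul, ← zpow_add, pow_succ, mul_assoc]
    congr 3
    omega

end Main

theorem xq_isQM (R : Type*) [CommRing R] (q : Rˣ) (n : ℕ) : IsQM q (xq R q n) where
  col {i j k} h := by
    have := RingQuot.mkAlgHom_rel R (QMRel.col (R := R) (q := q) (n := n) (k := k) h)
    simp only [map_mul, map_smul] at this
    exact this
  row {k i j} h := by
    have := RingQuot.mkAlgHom_rel R (QMRel.row (R := R) (q := q) (n := n) (k := k) h)
    simp only [map_mul, map_smul] at this
    exact this
  comm h1 h2 := by
    have := RingQuot.mkAlgHom_rel R (QMRel.comm (R := R) (q := q) (n := n) h1 h2)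
    simp only [map_mul] at this
    exact this
  qcomm h1 h2 := by
    have := RingQuot.mkAlgHom_rel R (QMRel.qcomm (R := R) (q := q) (n := n) h1 h2)
    simp only [map_mul, map_smul, map_add] at this
    exact this

theorem qMinorR_eq {R : Type*} [CommRing R] {q : Rˣ} {n k : ℕ} {r c : Fin k → Fin n}
    (hr : StrictMono r) (hc : StrictMono c) :
    qMinorR R q n r c = qm (-(q : R)) (xq R q n) (Finset.univ.image r) (Finset.univ.image c) := by
  rw [← bridge' _ _ hr hc, qMinorR]
  simp only [Units.val_pow_eq_pow_val, Units.val_neg]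

theorem omitIdx_strictMono {n : ℕ} (a : Fin n) : StrictMono (omitIdx a) := by
  intro s t h
  rw [Fin.lt_def] at h ⊢
  simp only [omitIdx]
  split_ifs <;> simp only <;> omega

theorem omitIdx_image {n : ℕ} (a : Fin n) :
    Finset.univ.image (omitIdx a) = Finset.univ.erase a := by
  apply Finset.eq_of_subset_of_card_le
  · intro z hz
    simp only [Finset.mem_image, Finset.mem_univ, true_and] at hz
    obtain ⟨t, rfl⟩ := hz
    simp only [Finset.mem_erase, Finset.mem_univ, and_true, ne_eq, Fin.ext_iff, omitIdx]
    split_ifs <;> simp only <;> omega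
  · rw [Finset.card_image_of_injective _ (omitIdx_strictMono a).injective]
    simp [Finset.card_erase_of_mem]

/-- Jacobi's Ratio Theorem, quantum version. -/
theorem stmt10 (R : Type*) [CommRing R] (q : Rˣ) (n l : ℕ) (hl1 : 1 ≤ l) (hln : l ≤ n)
    (i j : Fin l → Fin n) (hi : StrictMono i) (hj : StrictMono j)
    (i' j' : Fin (n - l) → Fin n) (hi' : StrictMono i') (hj' : StrictMono j')
    (hicompl : ∀ x : Fin n, (∃ t, i' t = x) ↔ ¬ ∃ t, i t = x)
    (hjcompl : ∀ x : Fin n, (∃ t, j' t = x) ↔ ¬ ∃ t, j t = x) :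
    ∑ w : Equiv.Perm (Fin l),
        (((-(q⁻¹)) ^ invCount w : Rˣ) : R) •
          oprod (fun t => yElt R q n (i (w t)) (j t)) =
      (((-q) ^ (∑ t, ((j t : ℤ) - (i t : ℤ))) : Rˣ) : R) •
        (detq R q n ^ (l - 1) * qMinorR R q n i' j') := by
  obtain ⟨k, rfl⟩ : ∃ k, l = k + 1 := ⟨l - 1, by omega⟩
  have hx := xq_isQM R q n
  have hY : ∀ a b, yElt R q n a b = qY q (xq R q n) a b := by
    intro a b
    rw [yElt, qY, compMinor, qMinorR_eq (omitIdx_strictMono a) (omitIdx_strictMono b),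
      omitIdx_image, omitIdx_image]
  have hD : detq R q n = qD q (xq R q n) := by
    rw [detq, qMinorR_eq (r := fun t => t) (c := fun t => t) strictMono_id strictMono_id, qD]
    simp [Finset.image_id']
  have hI : Finset.univ.image i' = (Finset.univ.image i)ᶜ := by
    ext z; simpa using hicompl z
  have hJ : Finset.univ.image j' = (Finset.univ.image j)ᶜ := by
    ext z; simpa using hjcompl z
  rw [hD, qMinorR_eq hi' hj', hI, hJ]
  simp only [hY, Units.val_pow_eq_pow_val]
  have e : (-(q⁻¹) : Rˣ) = (-q)⁻¹ := by
    rw [eq_inv_iff_mul_eq_one]; simp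
  rw [bridge' _ (qY q (xq R q n)) hi hj, e, jacobi hx k _ _
    (by rw [Finset.card_image_of_injective _ hi.injective]; simp)
    (by rw [Finset.card_image_of_injective _ hj.injective]; simp),
    Finset.sum_image (fun a _ b _ h => hj.injective h),
    Finset.sum_image (fun a _ b _ h => hi.injective h), Finset.sum_sub_distrib]
  rfl
end

section
/- There is a bijection between (a) the set of standard rational (ρ,σ)-tableaux with entries in {1,…,n}, where (ρ,σ) ranges over all pairs with ρ ∈ Λ+(r−k), σ ∈ Λ+(s−k) for some 0 ≤ k ≤ min(r,s), and (b) the set of standard λ-tableaux with entries in {1,…,n}, where λ ranges over all partitions of r+(n−1)s satisfying λ_1 ≤ n and Σ_{i=1}^{s} λ_i ≥ (n−1)s. -/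
open scoped BigOperators

/-- A partition of `m`: an antitone sequence of parts which vanishes from
index `m` on and has total sum `m`. -/
structure RPartition (m : ℕ) where
  part : ℕ → ℕ
  antitone' : ∀ ⦃i j : ℕ⦄, i ≤ j → part j ≤ part i
  vanish : ∀ i, m ≤ i → part i = 0
  sum_eq : ∑ i ∈ Finset.range m, part i = m

/-- A tableau of shape `p` with entries in `{1,…,n}` (encoded as `Fin n`,
0-based); entries outside the shape are the junk value `0`. -/
structure Tab (n : ℕ) [NeZero n] (p : ℕ → ℕ) where
  entry : ℕ → ℕ → Fin n
  outside : ∀ i j, p i ≤ j → entry i j = 0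

/-- A tableau is standard if its rows strictly increase from left to right and
its columns are nondecreasing downward. -/
def IsStdTab {n : ℕ} [NeZero n] {p : ℕ → ℕ} (T : Tab n p) : Prop :=
  (∀ i j1 j2, j1 < j2 → j2 < p i → T.entry i j1 < T.entry i j2) ∧
  (∀ i j, j < p (i + 1) → T.entry i j ≤ T.entry (i + 1) j)

/-- The number of entries `≤ x` in the first row of a tableau. -/
def firstRowCount {n : ℕ} [NeZero n] {p : ℕ → ℕ} (T : Tab n p) (x : Fin n) : ℕ :=
  ((Finset.range (p 0)).filter fun j => T.entry 0 j ≤ x).card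

/-- A rational tableau `(T1, T2)` is standard if both tableaux are standard
and for every `i = 1,…,n` the number of entries `≤ i` in the first row of `T1`
plus the number of entries `≤ i` in the first row of `T2` is at most `i`. -/
def IsStdRatPair {n : ℕ} [NeZero n] {p1 p2 : ℕ → ℕ} (T1 : Tab n p1) (T2 : Tab n p2) : Prop :=
  IsStdTab T1 ∧ IsStdTab T2 ∧
    ∀ x : Fin n, firstRowCount T1 x + firstRowCount T2 x ≤ (x : ℕ) + 1


/-- A rational `(ρ,σ)`-tableau: a pair of a `ρ`-tableau and a `σ`-tableau
with `ρ ∈ Λ⁺(r−k)`, `σ ∈ Λ⁺(s−k)` for some `0 ≤ k ≤ min(r,s)` and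
`ρ₁ + σ₁ ≤ n`. -/
structure RatTabS (n r s : ℕ) [NeZero n] where
  k : ℕ
  hk : k ≤ min r s
  ρ : RPartition (r - k)
  σ : RPartition (s - k)
  hrow : ρ.part 0 + σ.part 0 ≤ n
  t1 : Tab n ρ.part
  t2 : Tab n σ.part

namespace RT

def cnt {n : ℕ} (A : Finset (Fin n)) (x : Fin n) : ℕ := (A.filter fun y => y ≤ x).card

def Dom {n : ℕ} (A B : Finset (Fin n)) : Prop := ∀ x, cnt B x ≤ cnt A x

def rows {n : ℕ} (p : ℕ → ℕ) (e : ℕ → ℕ → Fin n) (i : ℕ) : Finset (Fin n) :=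
  (Finset.range (p i)).image (e i)

noncomputable def ent {n : ℕ} [NeZero n] (R : ℕ → Finset (Fin n)) (i j : ℕ) : Fin n :=
  if h : j < (R i).card then (R i).orderEmbOfFin rfl ⟨j, h⟩ else 0

noncomputable def tabOf {n : ℕ} [NeZero n] (R : ℕ → Finset (Fin n)) :
    Tab n (fun i => (R i).card) where
  entry := ent R
  outside := by
    intro i j h
    simp [ent, Nat.not_lt.mpr h]

lemma rows_ent {n : ℕ} [NeZero n] (R : ℕ → Finset (Fin n)) :
    rows (fun i => (R i).card) (ent R) = R := by
  funext i
  ext y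
  simp only [rows, Finset.mem_image, Finset.mem_range]
  constructor
  · rintro ⟨j, hj, rfl⟩
    simp only [ent, hj, dif_pos]
    exact Finset.orderEmbOfFin_mem _ _ _
  · intro hy
    have : y ∈ Set.range ((R i).orderEmbOfFin rfl) := by
      rw [Finset.range_orderEmbOfFin]; exact hy
    obtain ⟨⟨j, hj⟩, rfl⟩ := this
    exact ⟨j, hj, by simp [ent, hj]⟩

section
variable {n : ℕ} [NeZero n] {p : ℕ → ℕ} (T : Tab n p)

lemma inj_row (h : IsStdTab T) (i : ℕ) :
    Set.InjOn (T.entry i) (Finset.range (p i) : Set ℕ) := by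
  intro a ha b hb hab
  simp only [Finset.coe_range, Set.mem_Iio] at ha hb
  rcases lt_trichotomy a b with hl | hl | hl
  · exact absurd hab (h.1 i a b hl hb).ne
  · exact hl
  · exact absurd hab (h.1 i b a hl ha).ne'

lemma card_rows (h : IsStdTab T) (i : ℕ) : (rows p T.entry i).card = p i := by
  rw [rows, Finset.card_image_of_injOn (inj_row T h i), Finset.card_range]

lemma cnt_rows (h : IsStdTab T) (i : ℕ) (x : Fin n) :
    cnt (rows p T.entry i) x = ((Finset.range (p i)).filter fun j => T.entry i j ≤ x).card := by
  rw [cnt, rows, Finset.filter_image, Finset.card_image_of_injOn]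
  exact (inj_row T h i).mono (by intro a; simp; tauto)

lemma entry_eq (h : IsStdTab T) : T.entry = ent (rows p T.entry) := by
  funext i j
  by_cases hj : j < p i
  · have hj' : j < (rows p T.entry i).card := by rwa [card_rows T h]
    simp only [ent, hj', dif_pos]
    have := Finset.orderEmbOfFin_unique (s := rows p T.entry i) rfl
      (f := fun a => T.entry i a.1)
      (fun a => by
        have := a.2
        simp only [card_rows T h] at this
        exact Finset.mem_image.2 ⟨a.1, Finset.mem_range.2 this, rfl⟩)
      (fun a b hab => h.1 i _ _ hab (by
        have := b.2
        simpa only [card_rows T h] using this))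
    exact congrFun this ⟨j, hj'⟩
  · have hj' : ¬ j < (rows p T.entry i).card := by rwa [card_rows T h]
    simp only [ent, hj', dif_neg, not_false_eq_true]
    exact T.outside i j (not_lt.1 hj)

lemma dom_rows (h : IsStdTab T) (hp : ∀ ⦃i j : ℕ⦄, i ≤ j → p j ≤ p i) (i : ℕ) :
    Dom (rows p T.entry i) (rows p T.entry (i + 1)) := by
  intro x
  rw [cnt_rows T h, cnt_rows T h]
  apply Finset.card_le_card
  intro j
  simp only [Finset.mem_filter, Finset.mem_range]
  rintro ⟨h1, h2⟩
  exact ⟨lt_of_lt_of_le h1 (hp (Nat.le_succ i)), (h.2 i j h1).trans h2⟩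

end

lemma cnt_last {n : ℕ} [NeZero n] (A : Finset (Fin n)) : ∃ x : Fin n, ∀ A, cnt A x = A.card := by
  have := NeZero.pos n
  refine ⟨⟨n - 1, by omega⟩, fun A => ?_⟩
  rw [cnt, Finset.filter_true_of_mem]
  intro y _
  have := y.2
  exact Fin.le_def.2 (by simp; omega)

lemma Dom.card_le {n : ℕ} [NeZero n] {A B : Finset (Fin n)} (h : Dom A B) : B.card ≤ A.card := by
  obtain ⟨x, hx⟩ := cnt_last A
  simpa [hx] using h x

lemma Dom.card_anti {n : ℕ} [NeZero n] {R : ℕ → Finset (Fin n)}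
    (h : ∀ i, Dom (R i) (R (i + 1))) : ∀ ⦃i j : ℕ⦄, i ≤ j → (R j).card ≤ (R i).card :=
  antitone_nat_of_succ_le (f := fun i => (R i).card) (fun i => (h i).card_le)

lemma cnt_compl {n : ℕ} (A : Finset (Fin n)) (x : Fin n) : cnt A x + cnt Aᶜ x = x + 1 := by
  have h := Finset.card_filter_add_card_filter_not (s := Finset.univ.filter fun y : Fin n => y ≤ x)
    (fun y => y ∈ A)
  have h2 : (Finset.univ.filter fun y : Fin n => y ≤ x).card = x + 1 := by
    rw [← Fin.card_Iic]; congr 1; ext; simp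
  rw [h2, Finset.filter_filter, Finset.filter_filter] at h
  rw [← h, cnt, cnt]
  congr 2 <;> ext y <;> simp [and_comm]

lemma Dom.compl {n : ℕ} {A B : Finset (Fin n)} (h : Dom A B) : Dom Bᶜ Aᶜ := by
  intro x
  have := h x
  have := cnt_compl A x
  have := cnt_compl B x
  omega

lemma std_tabOf {n : ℕ} [NeZero n] {R : ℕ → Finset (Fin n)}
    (h : ∀ i, Dom (R i) (R (i + 1))) : IsStdTab (tabOf R) := by
  have h1 : ∀ i j1 j2, j1 < j2 → j2 < (R i).card → ent R i j1 < ent R i j2 := by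
    intro i j1 j2 h12 h2
    simp only [ent, h2, h12.trans h2, dif_pos]
    exact (OrderEmbedding.lt_iff_lt _).2 h12
  refine ⟨h1, ?_⟩
  intro i j hj
  change ent R i j ≤ ent R (i + 1) j
  change j < (R (i+1)).card at hj
  by_contra hlt
  rw [not_le] at hlt
  have hc := h i (ent R (i + 1) j)
  have e1 : j + 1 ≤ cnt (R (i+1)) (ent R (i + 1) j) := by
    have : ((Finset.range (j+1)).image (ent R (i+1))).card = j + 1 := by
      rw [Finset.card_image_of_injOn, Finset.card_range]
      intro a ha b hb hab
      simp only [Finset.coe_range, Set.mem_Iio] at ha hb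
      rcases lt_trichotomy a b with hl | hl | hl
      · exact absurd hab (h1 (i+1) a b hl (by omega)).ne
      · exact hl
      · exact absurd hab (h1 (i+1) b a hl (by omega)).ne'
    rw [← this]
    apply Finset.card_le_card
    intro y hy
    simp only [Finset.mem_image, Finset.mem_range] at hy
    obtain ⟨a, ha, rfl⟩ := hy
    rw [Finset.mem_filter]
    constructor
    · have : a < (R (i+1)).card := by omega
      simp only [ent, this, dif_pos]
      exact Finset.orderEmbOfFin_mem _ _ _
    · rcases (Nat.lt_succ_iff.1 ha).lt_or_eq with hl | rfl
      · exact (h1 _ _ _ hl hj).le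
      · exact le_rfl
  have e2 : cnt (R i) (ent R (i + 1) j) ≤ j := by
    have : ((Finset.range j).image (ent R i)).card ≤ j := by
      simpa using Finset.card_image_le (s := Finset.range j) (f := ent R i)
    refine le_trans (Finset.card_le_card ?_) this
    intro y hy
    rw [Finset.mem_filter] at hy
    obtain ⟨hy, hyx⟩ := hy
    rw [← rows_ent R] at hy
    simp only [rows, Finset.mem_image, Finset.mem_range] at hy
    obtain ⟨a, ha, rfl⟩ := hy
    rw [Finset.mem_image]
    refine ⟨a, ?_, rfl⟩
    rw [Finset.mem_range]
    by_contra hja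
    have : ent R i j ≤ ent R i a := by
      rcases (not_lt.1 hja).lt_or_eq with hl | rfl
      · exact (h1 _ _ _ hl ha).le
      · exact le_rfl
    exact absurd (lt_of_lt_of_le hlt (this.trans hyx)) (lt_irrefl _)
  omega

lemma sum_ext {p : ℕ → ℕ} {N M : ℕ} (hN : ∀ i, N ≤ i → p i = 0) (hM : N ≤ M) :
    ∑ i ∈ Finset.range M, p i = ∑ i ∈ Finset.range N, p i := by
  symm
  apply Finset.sum_subset
  · intro a; simp; omega
  · intro a _ h
    exact hN a (by simpa using h)

lemma tot {p : ℕ → ℕ} (hp : ∀ ⦃i j : ℕ⦄, i ≤ j → p j ≤ p i) {N m : ℕ}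
    (hN : ∀ i, N ≤ i → p i = 0) (hs : ∑ i ∈ Finset.range N, p i = m) :
    (∀ i, m ≤ i → p i = 0) ∧ ∑ i ∈ Finset.range m, p i = m := by
  have h1 : ∀ i, m ≤ i → p i = 0 := by
    intro i hi
    by_contra h0
    have hiN : i < N := by
      by_contra h; exact h0 (hN i (not_lt.1 h))
    have a1 : ∑ j ∈ Finset.range (i+1), p j ≤ m := by
      rw [← hs]
      exact Finset.sum_le_sum_of_subset (by intro a; simp; omega)
    have a2 : ∑ j ∈ Finset.range (i+1), 1 ≤ ∑ j ∈ Finset.range (i+1), p j := by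
      apply Finset.sum_le_sum
      intro j hj
      have := hp (show j ≤ i by simpa [Nat.lt_succ_iff] using hj)
      omega
    simp at a2
    omega
  refine ⟨h1, ?_⟩
  rw [← sum_ext h1 (le_max_left m N), sum_ext hN (le_max_right m N), hs]

noncomputable def mkPart {n : ℕ} [NeZero n] (R : ℕ → Finset (Fin n))
    (h : ∀ i, Dom (R i) (R (i + 1))) {N m : ℕ}
    (hN : ∀ i, N ≤ i → (R i).card = 0) (hs : ∑ i ∈ Finset.range N, (R i).card = m) :
    RPartition m where
  part := fun i => (R i).card
  antitone' := Dom.card_anti h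
  vanish := (tot (Dom.card_anti h) hN hs).1
  sum_eq := (tot (Dom.card_anti h) hN hs).2

lemma RPartition_ext {m : ℕ} {a b : RPartition m} (h : a.part = b.part) : a = b := by
  cases a; cases b; simp at h; subst h; rfl

lemma Tab_ext {n : ℕ} [NeZero n] {p : ℕ → ℕ} {a b : Tab n p} (h : a.entry = b.entry) : a = b := by
  cases a; cases b; simp at h; subst h; rfl

lemma part_tab_ext {n : ℕ} [NeZero n] {m : ℕ} {a b : RPartition m} {T : Tab n a.part}
    {U : Tab n b.part} (hT : IsStdTab T) (hU : IsStdTab U)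
    (h : rows a.part T.entry = rows b.part U.entry) : a = b ∧ HEq T U := by
  have hp : a = b := by
    apply RPartition_ext
    funext i
    rw [← card_rows T hT, ← card_rows U hU, h]
  subst hp
  refine ⟨rfl, heq_of_eq (Tab_ext ?_)⟩
  rw [entry_eq T hT, entry_eq U hU, h]

def S (n r s : ℕ) : Set (ℕ → Finset (Fin n)) :=
  {R | (∀ i, Dom (R i) (R (i + 1))) ∧
    (∃ N, (∀ i, N ≤ i → (R i).card = 0) ∧
      ∑ i ∈ Finset.range N, (R i).card = r + (n - 1) * s) ∧
    (n - 1) * s ≤ ∑ i ∈ Finset.range s, (R i).card}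

def g (n r s : ℕ) [NeZero n] (y : {y : Σ lam : RPartition (r + (n - 1) * s), Tab n lam.part //
          IsStdTab y.2 ∧ y.1.part 0 ≤ n ∧
            (n - 1) * s ≤ ∑ i ∈ Finset.range s, y.1.part i}) : ℕ → Finset (Fin n) :=
  rows y.1.1.part y.1.2.entry

lemma g_inj (n r s : ℕ) [NeZero n] : Function.Injective (g n r s) := by
  rintro ⟨⟨a, T⟩, hT, _⟩ ⟨⟨b, U⟩, hU, _⟩ h
  obtain ⟨rfl, h2⟩ := part_tab_ext hT hU h
  cases h2
  rfl

lemma g_range (n r s : ℕ) [NeZero n] : Set.range (g n r s) = S n r s := by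
  ext R
  constructor
  · rintro ⟨⟨⟨a, T⟩, hT, h1, h2⟩, rfl⟩
    refine ⟨dom_rows T hT a.antitone', ⟨r + (n - 1) * s, ?_, ?_⟩, ?_⟩
    · intro i hi
      simp only [g]
      rw [card_rows T hT]
      exact a.vanish i hi
    · simp only [g, card_rows T hT]
      exact a.sum_eq
    · simp only [g, card_rows T hT]
      exact h2
  · rintro ⟨h1, ⟨N, hN, hs⟩, h3⟩
    refine ⟨⟨⟨mkPart R h1 hN hs, tabOf R⟩, std_tabOf h1, ?_, h3⟩, rows_ent R⟩
    simpa [mkPart] using Finset.card_le_univ (R 0)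

def f (n r s : ℕ) [NeZero n] (x : {x : RatTabS n r s // IsStdRatPair x.t1 x.t2}) :
    ℕ → Finset (Fin n) := fun i =>
  if i < s then (rows x.1.σ.part x.1.t2.entry (s - 1 - i))ᶜ
  else rows x.1.ρ.part x.1.t1.entry (i - s)

lemma f_inj (n r s : ℕ) [NeZero n] : Function.Injective (f n r s) := by
  rintro ⟨⟨k, hk, ρ, σ, hr, t1, t2⟩, ht1, ht2, ht⟩ ⟨⟨k', hk', ρ', σ', hr', t1', t2'⟩, ht1', ht2', ht'⟩ h
  simp only at ht1 ht2 ht1' ht2'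
  have e1 : rows ρ.part t1.entry = rows ρ'.part t1'.entry := by
    funext i
    have := congrFun h (i + s)
    simpa [f] using this
  have e2 : rows σ.part t2.entry = rows σ'.part t2'.entry := by
    funext i
    by_cases hi : i < s
    · have := congrFun h (s - 1 - i)
      have h1 : s - 1 - i < s := by omega
      have h2 : s - 1 - (s - 1 - i) = i := by omega
      simpa [f, h1, h2] using this
    · have a1 : σ.part i = 0 := σ.vanish i (by omega)
      have a2 : σ'.part i = 0 := σ'.vanish i (by omega)
      simp [rows, a1, a2]
  have hkk : k = k' := by
    have hp : ρ.part = ρ'.part := by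
      funext i
      rw [← card_rows t1 ht1, ← card_rows t1' ht1', e1]
    have a1 := sum_ext ρ.vanish (Nat.sub_le r k)
    have a2 := sum_ext ρ'.vanish (Nat.sub_le r k')
    rw [ρ.sum_eq] at a1
    rw [ρ'.sum_eq, ← hp, a1] at a2
    omega
  subst hkk
  obtain ⟨rfl, h1⟩ := part_tab_ext ht1 ht1' e1
  obtain ⟨rfl, h2⟩ := part_tab_ext ht2 ht2' e2
  cases h1
  cases h2
  rfl

lemma ns {n s : ℕ} [NeZero n] : n * s = (n - 1) * s + s := by
  obtain ⟨m, rfl⟩ := Nat.exists_eq_succ_of_ne_zero (NeZero.ne n)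
  simp [Nat.succ_mul]

lemma sum_compl {n : ℕ} (s : ℕ) (R : ℕ → Finset (Fin n)) :
    ∑ i ∈ Finset.range s, ((R (s - 1 - i))ᶜ).card + ∑ i ∈ Finset.range s, (R i).card = n * s := by
  rw [Finset.sum_range_reflect (fun i => ((R i)ᶜ).card) s, ← Finset.sum_add_distrib]
  have : ∀ i, ((R i)ᶜ).card + (R i).card = n := by
    intro i
    simpa using Finset.card_compl_add_card (R i)
  simp [this, mul_comm]

lemma f_range (n r s : ℕ) [NeZero n] : Set.range (f n r s) = S n r s := by
  ext R
  constructor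
  · rintro ⟨⟨⟨k, hk, ρ, σ, hr, t1, t2⟩, ht1, ht2, ht⟩, rfl⟩
    simp only at ht1 ht2 ht
    set A := rows ρ.part t1.entry with hA
    set B := rows σ.part t2.entry with hB
    have dA : ∀ i, Dom (A i) (A (i + 1)) := dom_rows t1 ht1 ρ.antitone'
    have dB : ∀ i, Dom (B i) (B (i + 1)) := dom_rows t2 ht2 σ.antitone'
    have cA : ∀ i, (A i).card = ρ.part i := card_rows t1 ht1
    have cB : ∀ i, (B i).card = σ.part i := card_rows t2 ht2
    have sA : ∑ i ∈ Finset.range r, (A i).card = r - k := by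
      simp only [cA]
      rw [sum_ext ρ.vanish (Nat.sub_le r k), ρ.sum_eq]
    have sB : ∑ i ∈ Finset.range s, (B i).card = s - k := by
      simp only [cB]
      rw [sum_ext σ.vanish (Nat.sub_le s k), σ.sum_eq]
    have hC := sum_compl s B
    have hn := ns (n := n) (s := s)
    set F := f n r s ⟨⟨k, hk, ρ, σ, hr, t1, t2⟩, ht1, ht2, ht⟩ with hF
    have F1 : ∀ i, i < s → F i = (B (s - 1 - i))ᶜ := by
      intro i hi
      simp [hF, f, hi, hB]
    have F2 : ∀ i, F (s + i) = A i := by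
      intro i
      simp [hF, f, hA]
    have sF : ∑ i ∈ Finset.range s, (F i).card = ∑ i ∈ Finset.range s, ((B (s - 1 - i))ᶜ).card :=
      Finset.sum_congr rfl (fun i hi => by rw [F1 i (Finset.mem_range.1 hi)])
    refine ⟨?_, ⟨s + r, ?_, ?_⟩, ?_⟩
    · intro i
      rcases lt_trichotomy (i + 1) s with hi | hi | hi
      · rw [F1 i (by omega), F1 (i + 1) hi]
        have := (dB (s - 1 - (i + 1))).compl
        rwa [show s - 1 - (i + 1) + 1 = s - 1 - i by omega] at this
      · rw [F1 i (by omega), hi, show s - 1 - i = 0 by omega]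
        rw [show F s = A 0 from F2 0]
        intro x
        have h1 := ht x
        have h2 := cnt_compl (B 0) x
        have h3 : cnt (A 0) x = firstRowCount t1 x := cnt_rows t1 ht1 0 x
        have h4 : cnt (B 0) x = firstRowCount t2 x := cnt_rows t2 ht2 0 x
        omega
      · obtain ⟨j, rfl⟩ := Nat.exists_eq_add_of_le (show s ≤ i by omega)
        rw [add_assoc, F2, F2]
        exact dA j
    · intro i hi
      obtain ⟨j, rfl⟩ := Nat.exists_eq_add_of_le (show s ≤ i by omega)
      rw [F2, cA]
      exact ρ.vanish j (by omega)
    · rw [Finset.sum_range_add, sF]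
      simp only [F2]
      omega
    · omega
  · rintro ⟨h1, ⟨N, hN, hs⟩, h3⟩
    set B : ℕ → Finset (Fin n) := fun i => if i < s then (R (s - 1 - i))ᶜ else ∅ with hB
    set A : ℕ → Finset (Fin n) := fun i => R (s + i) with hA
    have dA : ∀ i, Dom (A i) (A (i + 1)) := fun i => h1 (s + i)
    have dB : ∀ i, Dom (B i) (B (i + 1)) := by
      intro i
      by_cases hi : i + 1 < s
      · simp only [hB, hi, show i < s by omega, if_true]
        have := (h1 (s - 1 - (i + 1))).compl
        rwa [show s - 1 - (i + 1) + 1 = s - 1 - i by omega] at this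
      · simp only [hB, hi, if_false]
        intro x
        simp [cnt]
    have sB : ∑ i ∈ Finset.range s, (B i).card = ∑ i ∈ Finset.range s, ((R (s - 1 - i))ᶜ).card :=
      Finset.sum_congr rfl (fun i hi => by simp [hB, Finset.mem_range.1 hi])
    have hC := sum_compl s R
    have hn := ns (n := n) (s := s)
    have hT : ∑ i ∈ Finset.range s, (R i).card + ∑ i ∈ Finset.range N, (A i).card
        = r + (n - 1) * s := by
      rw [← hs, ← sum_ext hN (Nat.le_add_left N s), Finset.sum_range_add]
    obtain ⟨k, hk⟩ := Nat.exists_eq_add_of_le h3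
    have hAs : ∑ i ∈ Finset.range N, (A i).card = r - k := by omega
    have hBs : ∑ i ∈ Finset.range s, (B i).card = s - k := by omega
    have hkr : k ≤ min r s := by
      rw [le_min_iff]; omega
    have hd : ∀ x, cnt (A 0) x + cnt (B 0) x ≤ x + 1 := by
      intro x
      by_cases h0 : 0 < s
      · have e1 := h1 (s - 1) x
        have e2 := cnt_compl (R (s - 1)) x
        rw [show s - 1 + 1 = s by omega] at e1
        simp only [hA, hB, h0, if_true, add_zero, Nat.sub_zero]
        omega
      · simp only [hB, h0, if_false]
        have e2 := cnt_compl (A 0) x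
        have : cnt (∅ : Finset (Fin n)) x = 0 := by simp [cnt]
        omega
    have tA := std_tabOf dA
    have tB := std_tabOf dB
    refine ⟨⟨⟨k, hkr, mkPart A dA (N := N) (fun i hi => hN _ (by omega)) hAs,
      mkPart B dB (N := s) (fun i hi => by simp [hB, Nat.not_lt.2 hi]) hBs, ?_,
      tabOf A, tabOf B⟩, tA, tB, ?_⟩, ?_⟩
    · obtain ⟨x, hx⟩ := cnt_last (A 0)
      have := hd x
      rw [hx, hx] at this
      have := x.2
      simp only [mkPart]
      omega
    · intro x
      have h5 := cnt_rows (tabOf A) tA 0 x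
      have h6 := cnt_rows (tabOf B) tB 0 x
      have h7 := hd x
      rw [← rows_ent A, ← rows_ent B] at h7
      exact (le_of_eq (congrArg₂ (· + ·) h5.symm h6.symm)).trans h7
    · funext i
      by_cases hi : i < s
      · have : rows (fun i => (B i).card) (ent B) (s - 1 - i) = B (s - 1 - i) := by rw [rows_ent]
        simp only [f, hi, if_true]
        refine (congrArg _ this).trans ?_
        simp only [hB, show s - 1 - i < s by omega, if_true, compl_compl]
        congr 1
        omega
      · have : rows (fun i => (A i).card) (ent A) (i - s) = A (i - s) := by rw [rows_ent]
        simp only [f, hi, if_false]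
        refine this.trans ?_
        simp only [hA]
        congr 1
        omega

end RT

/-- there is a bijection between the set of standard rational
`(ρ,σ)`-tableaux (over all `0 ≤ k ≤ min(r,s)`, `ρ ∈ Λ⁺(r−k)`, `σ ∈ Λ⁺(s−k)`)
with entries in `{1,…,n}` and the set of standard `λ`-tableaux with entries
in `{1,…,n}` where `λ` ranges over the partitions of `r+(n−1)s` with
`λ₁ ≤ n` and `Σ_{i=1}^s λ_i ≥ (n−1)s`. -/
theorem stmt11 (n r s : ℕ) [NeZero n] :
    Nonempty
      ({x : RatTabS n r s // IsStdRatPair x.t1 x.t2} ≃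
        {y : Σ lam : RPartition (r + (n - 1) * s), Tab n lam.part //
          IsStdTab y.2 ∧ y.1.part 0 ≤ n ∧
            (n - 1) * s ≤ ∑ i ∈ Finset.range s, y.1.part i}) := by
  exact ⟨(Equiv.ofInjective _ (RT.f_inj n r s)).trans
    ((Equiv.setCongr ((RT.f_range n r s).trans (RT.g_range n r s).symm)).trans
      (Equiv.ofInjective _ (RT.g_inj n r s)).symm)⟩
end
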